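/- arXiv:1205.5405 — 2 statements merged into one kernel-verified Lean document; each statement's English description precedes it below -/
import Mathlib

section
/- For every rational k in the interval [2,3), g(k,4) = (1/2)·(√((k−1)² + 4) − k + 1). -/
/-!
Write `g` for the claimed value; it is the positive root of `ε (k - 1 + ε) = 1`.

Upper bound. Let `ε (k - 1 + ε) ≥ 1` and `r = k + ε`. The set `[0, r)` can be rearranged
(`exists_spread`) so that every color of the given `k`-coloring, as well as the block of `ε` spare
colors, meets every precolored set in the proportion `1 / r`. Vertices that are neither precolored
nor adjacent to a precolored vertex keep their rearranged colors. A neighbor `v` of a precolored `w`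
may use its own and the spare colors outside `P w`, of total measure `(1 + ε) (1 - 1 / r) ≥ 1`.
No conflict arises: distance at least four and `k < 3` (no triangles) make the neighbors of
precolored vertices pairwise nonadjacent. See `extendsAll_of_le`.

Lower bound. Let `k = p / q`, and let `r = k + ε = a / b` be rational with `ε < g`. The core of the
graph is the circular clique on `ℤ/p`; each of its vertices `B` has `a` twins attached, each twin
with one pendant precolored vertex, the precolors being the `a` rotations of a unit interval of
`[0, r)`. Averaging over the rotations, a twin loses a proportion `1 / r` of the colors left over by
the neighbors of `B`; by isoperimetry in the circular clique (`card_neighbors`, based on Katona's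
cycle lemma) these neighbors use measure at least `k - 1` on average. So an extension forces
`(1 + ε) (1 - 1 / r) ≥ 1`, that is `ε (k - 1 + ε) ≥ 1`. See `le_of_extendsAll`.
-/

open MeasureTheory

/-- A fractional `r`-coloring of a graph `G`: an assignment of measurable subsets of the
real interval `[0,r)` to the vertices such that each vertex receives a set of Lebesgue
measure one and adjacent vertices receive disjoint sets. -/
def IsFracColoring {V : Type*} (G : SimpleGraph V) (r : ℝ) (c : V → Set ℝ) : Prop :=
  (∀ v, c v ⊆ Set.Ico 0 r) ∧ (∀ v, MeasurableSet (c v)) ∧ (∀ v, volume (c v) = 1) ∧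
    ∀ u v, G.Adj u v → Disjoint (c u) (c v)

/-- `G` is fractionally `r`-colorable. -/
def FracColorable {V : Type*} (G : SimpleGraph V) (r : ℝ) : Prop :=
  ∃ c, IsFracColoring G r c

/-- A fractional `r`-precoloring of the set `W` of vertices: each vertex of `W` is
assigned a measurable subset of `[0,r)` of Lebesgue measure one. -/
def IsFracPrecoloring {V : Type*} (r : ℝ) (W : Set V) (P : V → Set ℝ) : Prop :=
  ∀ w ∈ W, P w ⊆ Set.Ico 0 r ∧ MeasurableSet (P w) ∧ volume (P w) = 1

/-- The vertices of `W` are at pairwise graph distance at least `d` in `G`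
(every walk between two distinct vertices of `W` has length at least `d`). -/
def DistAtLeast {V : Type*} (G : SimpleGraph V) (d : ℕ) (W : Set V) : Prop :=
  ∀ u ∈ W, ∀ v ∈ W, u ≠ v → ∀ w : G.Walk u v, d ≤ w.length

/-- For every finite fractionally `k`-colorable graph `G` and every set `W` of vertices at
pairwise distance at least `d`, every fractional `(k+ε)`-precoloring of `W` extends to a
fractional `(k+ε)`-coloring of `G`. -/
def ExtendsAll (k : ℝ) (d : ℕ) (ε : ℝ) : Prop :=
  ∀ (V : Type) [Fintype V], ∀ (G : SimpleGraph V) (W : Set V), FracColorable G k →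
    DistAtLeast G d W → ∀ P : V → Set ℝ, IsFracPrecoloring (k + ε) W P →
      ∃ c, IsFracColoring G (k + ε) c ∧ ∀ w ∈ W, c w = P w

/-- The quantity `g(k,d)`: the infimum over all non-negative reals `ε₀` such that the
extension property holds for every `ε ≥ ε₀`. -/
noncomputable def gExt (k : ℝ) (d : ℕ) : ℝ :=
  sInf {ε₀ : ℝ | 0 ≤ ε₀ ∧ ∀ ε : ℝ, ε₀ ≤ ε → ExtendsAll k d ε}

/-! ### Spreading colors uniformly over finitely many sets -/

/-- The distribution function `F x = |Q ∩ (-∞, x]|` of a bounded set `Q` carries Lebesgue measure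
on `Q` to Lebesgue measure on `[0, |Q|)`. -/
theorem map_cdf {r : ℝ} {Q : Set ℝ} (hQr : Q ⊆ Set.Ico 0 r) :
    ∃ F : ℝ → ℝ, Measurable F ∧
      (volume.restrict Q).map F = volume.restrict (Set.Ico 0 (volume.real Q)) := by
  have hfin : ∀ x, volume (Q ∩ Set.Iic x) ≠ ⊤ := fun x =>
    measure_ne_top_of_subset (Set.inter_subset_left.trans hQr) (by simp)
  have hfinQ : volume Q ≠ ⊤ := measure_ne_top_of_subset hQr (by simp)
  set F : ℝ → ℝ := fun x => volume.real (Q ∩ Set.Iic x) with hF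
  have hmono : Monotone F := fun x y hxy =>
    measureReal_mono (Set.inter_subset_inter_right _ (Set.Iic_subset_Iic.2 hxy)) (hfin y)
  have hstep : ∀ x y, x ≤ y → F y - F x ≤ y - x := by
    intro x y hxy
    have h1 : Q ∩ Set.Iic y ⊆ (Q ∩ Set.Iic x) ∪ Set.Ioc x y := by
      rintro z ⟨hz, hzy⟩
      rcases le_or_gt z x with h | h
      · exact Or.inl ⟨hz, h⟩
      · exact Or.inr ⟨h, hzy⟩
    have h2 : F y ≤ F x + volume.real (Set.Ioc x y) :=
      (measureReal_mono h1 (measure_union_ne_top (hfin x) (by simp))).trans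
        (measureReal_union_le _ _)
    rw [Real.volume_real_Ioc_of_le hxy] at h2
    linarith
  have hcont : Continuous F := by
    refine (LipschitzWith.of_dist_le_mul (K := 1) fun x y => ?_).continuous
    simp only [Real.dist_eq, NNReal.coe_one, one_mul]
    rcases le_total x y with h | h
    · rw [abs_sub_comm, abs_of_nonneg (sub_nonneg.2 (hmono h)), abs_sub_comm x,
        abs_of_nonneg (sub_nonneg.2 h)]
      exact hstep x y h
    · rw [abs_of_nonneg (sub_nonneg.2 (hmono h)), abs_of_nonneg (sub_nonneg.2 h)]
      exact hstep y x h
  have hF0 : F (-1) = 0 := by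
    have : Q ∩ Set.Iic (-1) = ∅ := by
      ext z
      simp only [Set.mem_inter_iff, Set.mem_Iic, Set.mem_empty_iff_false, iff_false, not_and, not_le]
      intro hz
      have := (hQr hz).1
      linarith
    simp [hF, this]
  have hF1 : ∀ x, r ≤ x → F x = volume.real Q := by
    intro x hx
    have : Q ∩ Set.Iic x = Q := Set.inter_eq_left.2 fun z hz => ((hQr hz).2.le.trans hx)
    simp [hF, this]
  set R : ℝ := max r (-1) with hR
  have hFR : F R = volume.real Q := hF1 _ (le_max_left _ _)
  have hsurj : ∀ y, 0 ≤ y → y ≤ volume.real Q → ∃ x, F x = y := by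
    intro y h0 h1
    have := intermediate_value_Icc (le_max_right r (-1)) hcont.continuousOn
    obtain ⟨x, -, hx⟩ := this (show y ∈ Set.Icc (F (-1)) (F (max r (-1))) from
      ⟨by rw [hF0]; exact h0, by rw [← hR, hFR]; exact h1⟩)
    exact ⟨x, hx⟩
  refine ⟨F, hmono.measurable, ?_⟩
  have : IsFiniteMeasure (volume.restrict Q) := ⟨by simpa using hfinQ.lt_top⟩
  refine Measure.ext_of_Iic _ _ fun y => ?_
  rw [Measure.map_apply hmono.measurable measurableSet_Iic,
    Measure.restrict_apply (hmono.measurable measurableSet_Iic),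
    Measure.restrict_apply measurableSet_Iic]
  have hle : ∀ y x, y < F x → volume (F ⁻¹' Set.Iic y ∩ Q) ≤ ENNReal.ofReal (F x) := by
    intro y x hx
    rw [hF, ofReal_measureReal (hfin x)]
    refine measure_mono ?_
    rintro z ⟨hz, hzQ⟩
    refine ⟨hzQ, ?_⟩
    by_contra hcon
    have := hmono (le_of_lt (not_le.1 hcon))
    have hz' : F z ≤ y := hz
    linarith
  rcases lt_or_ge y 0 with hy | hy
  · have h1 : F ⁻¹' Set.Iic y ∩ Q = ∅ := by
      ext z
      simp only [Set.mem_inter_iff, Set.mem_preimage, Set.mem_Iic, Set.mem_empty_iff_false,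
        iff_false, not_and]
      intro h
      have : 0 ≤ F z := measureReal_nonneg
      linarith
    have h2 : Set.Iic y ∩ Set.Ico 0 (volume.real Q) = ∅ := by
      ext z
      simp only [Set.mem_inter_iff, Set.mem_Iic, Set.mem_Ico, Set.mem_empty_iff_false, iff_false]
      rintro ⟨h, h', -⟩
      linarith
    simp [h1, h2]
  rcases lt_or_ge y (volume.real Q) with hy1 | hy1
  · have h2 : Set.Iic y ∩ Set.Ico 0 (volume.real Q) = Set.Icc 0 y := by
      ext z
      simp only [Set.mem_inter_iff, Set.mem_Iic, Set.mem_Ico, Set.mem_Icc]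
      constructor
      · rintro ⟨h, h', -⟩; exact ⟨h', h⟩
      · rintro ⟨h, h'⟩; exact ⟨h', h, by linarith⟩
    rw [h2, Real.volume_Icc, sub_zero]
    apply le_antisymm
    · refine le_of_forall_gt_imp_ge_of_dense fun b hb => ?_
      rcases eq_or_ne b ⊤ with rfl | hbt
      · exact le_top
      have hb' : y < b.toReal := by
        rwa [← ENNReal.ofReal_lt_iff_lt_toReal hy hbt]
      obtain ⟨x, hx⟩ := hsurj (min b.toReal (volume.real Q)) (by positivity) (min_le_right _ _)
      have := hle y x (by rw [hx]; exact lt_min hb' hy1)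
      refine this.trans ?_
      rw [hx]
      exact ENNReal.ofReal_le_of_le_toReal (min_le_left _ _)
    · obtain ⟨x, hx⟩ := hsurj y hy hy1.le
      rw [← hx, hF, ofReal_measureReal (hfin x)]
      refine measure_mono ?_
      rintro z ⟨hzQ, hzx⟩
      exact ⟨hmono hzx, hzQ⟩
  · have h1 : F ⁻¹' Set.Iic y ∩ Q = Q := by
      refine Set.inter_eq_right.2 fun z hz => ?_
      have h : F z ≤ volume.real Q := measureReal_mono Set.inter_subset_left hfinQ
      exact h.trans hy1
    have h2 : Set.Iic y ∩ Set.Ico 0 (volume.real Q) = Set.Ico 0 (volume.real Q) :=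
      Set.inter_eq_right.2 fun z hz => hz.2.le.trans hy1
    rw [h1, h2, Real.volume_Ico, sub_zero, ofReal_measureReal hfinQ]

/-- A bounded set `Q` can be mapped to `[0, r)` so that Lebesgue measure on `Q` becomes a
constant multiple of Lebesgue measure on `[0, r)`: rescale the distribution function of `Q`. -/
theorem exists_uniformize {r : ℝ} (hr : 0 < r) {Q : Set ℝ} (hQr : Q ⊆ Set.Ico 0 r) :
    ∃ θ : ℝ → ℝ, Measurable θ ∧ ∀ A, MeasurableSet A → A ⊆ Set.Ico 0 r →
      volume.real (Q ∩ θ ⁻¹' A) = volume.real Q / r * volume.real A := by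
  have hfinQ : volume Q ≠ ⊤ := measure_ne_top_of_subset hQr (by simp)
  obtain ⟨F, hFm, hF⟩ := map_cdf hQr
  rcases (measureReal_nonneg (μ := volume) (s := Q)).eq_or_lt with h0 | h0
  · refine ⟨id, measurable_id, fun A _ _ => ?_⟩
    rw [← h0, zero_div, zero_mul]
    refine le_antisymm ?_ measureReal_nonneg
    rw [h0]
    exact measureReal_mono Set.inter_subset_left hfinQ
  set m := volume.real Q with hm
  refine ⟨fun x => r / m * F x, hFm.const_mul _, fun A hA hAr => ?_⟩
  have hA' : MeasurableSet ((fun x => r / m * x) ⁻¹' A) := (measurable_const_mul _) hA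
  have h1 : Q ∩ (fun x => r / m * F x) ⁻¹' A = F ⁻¹' ((fun x => r / m * x) ⁻¹' A) ∩ Q := by
    rw [Set.inter_comm]; rfl
  have h2 : (fun x => r / m * x) ⁻¹' A ∩ Set.Ico 0 m = (fun x => r / m * x) ⁻¹' A := by
    refine Set.inter_eq_left.2 fun x hx => ?_
    obtain ⟨ha, hb⟩ := hAr hx
    have hpos : 0 < r / m := by positivity
    constructor
    · exact nonneg_of_mul_nonneg_right ha hpos
    · have : r / m * x < r / m * m := by
        rw [div_mul_cancel₀ _ h0.ne']; exact hb
      exact lt_of_mul_lt_mul_left this hpos.le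
  have h3 : volume (F ⁻¹' ((fun x => r / m * x) ⁻¹' A) ∩ Q) =
      ENNReal.ofReal (m / r) * volume A := by
    rw [← Measure.restrict_apply (hFm hA'), ← Measure.map_apply hFm hA', hF,
      Measure.restrict_apply hA', h2, Real.volume_preimage_mul_left (by positivity), inv_div,
      abs_of_nonneg (by positivity)]
  rw [h1, measureReal_def, h3, ENNReal.toReal_mul, ENNReal.toReal_ofReal (by positivity)]
  rfl

theorem exists_subset_one {r : ℝ} {Q : Set ℝ} (hQ : MeasurableSet Q)
    (hQr : Q ⊆ Set.Ico 0 r) (h1 : 1 ≤ volume.real Q) :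
    ∃ D ⊆ Q, MeasurableSet D ∧ volume D = 1 := by
  have hr : 0 < r := by
    by_contra h
    rw [Set.Ico_eq_empty (by simpa using h), Set.subset_empty_iff] at hQr
    simp [hQr] at h1
    linarith
  obtain ⟨θ, hθ, h⟩ := exists_uniformize hr hQr
  set m := volume.real Q
  have hs : Set.Ico 0 (r / m) ⊆ Set.Ico 0 r :=
    Set.Ico_subset_Ico_right (div_le_self hr.le h1)
  have h2 := h _ measurableSet_Ico hs
  refine ⟨Q ∩ θ ⁻¹' Set.Ico 0 (r / m), Set.inter_subset_left, hQ.inter (hθ measurableSet_Ico), ?_⟩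
  rw [Real.volume_real_Ico_of_le (by positivity), sub_zero] at h2
  rw [← ENNReal.toReal_eq_one_iff, ← measureReal_def, h2]
  field_simp

/-- One map `θ` spreads every `A ⊆ [0, r)` evenly over all the sets `P i` at once: `θ ⁻¹' A`
occupies the same proportion `|A| / r` of each of them. It is obtained by applying
`exists_uniformize` on every atom of the algebra generated by the `P i`. -/
theorem exists_spread {r : ℝ} (hr : 0 < r) {ι : Type*} [Finite ι] (P : ι → Set ℝ)
    (hP : ∀ i, MeasurableSet (P i)) (hPr : ∀ i, P i ⊆ Set.Ico 0 r) :
    ∃ θ : ℝ → ℝ, Measurable θ ∧ ∀ i A, MeasurableSet A → A ⊆ Set.Ico 0 r →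
      volume.real (P i ∩ θ ⁻¹' A) = volume.real (P i) / r * volume.real A := by
  classical
  have := Fintype.ofFinite ι
  -- the fibers of `f` on `[0, r)` are the atoms of the algebra generated by the `P i`
  let f : ℝ → Finset ι := fun x => Finset.univ.filter fun i => x ∈ P i
  have hf : ∀ s, MeasurableSet (f ⁻¹' {s}) := by
    intro s
    have : f ⁻¹' {s} = ⋂ i, (if i ∈ s then P i else (P i)ᶜ) := by
      ext x
      simp only [f, Set.mem_preimage, Set.mem_singleton_iff, Finset.ext_iff, Finset.mem_filter,
        Finset.mem_univ, true_and, Set.mem_iInter]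
      refine forall_congr' fun i => ?_
      by_cases h : i ∈ s <;> simp [h]
    rw [this]
    refine MeasurableSet.iInter fun i => ?_
    split_ifs
    · exact hP i
    · exact (hP i).compl
  have hQ : ∀ s, MeasurableSet (Set.Ico 0 r ∩ f ⁻¹' {s}) := fun s =>
    measurableSet_Ico.inter (hf s)
  choose θ hθ h using fun s => exists_uniformize hr
    (Set.inter_subset_left : Set.Ico 0 r ∩ f ⁻¹' {s} ⊆ Set.Ico 0 r)
  have hdis : ∀ B : Set ℝ, ∀ i, P i ∩ B =
      ⋃ s ∈ Finset.univ.filter (fun s : Finset ι => i ∈ s), (Set.Ico 0 r ∩ f ⁻¹' {s} ∩ B) := by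
    intro B i
    ext x
    simp only [Set.mem_inter_iff, Finset.mem_filter, Finset.mem_univ, true_and, Set.mem_iUnion,
      Set.mem_preimage, Set.mem_singleton_iff, exists_prop]
    constructor
    · rintro ⟨hx, hB⟩
      exact ⟨f x, by simp [f, hx], ⟨hPr i hx, rfl⟩, hB⟩
    · rintro ⟨s, hs, ⟨-, rfl⟩, hB⟩
      exact ⟨by simpa [f] using hs, hB⟩
  have hsum : ∀ B : Set ℝ, MeasurableSet B → ∀ i, volume.real (P i ∩ B) =
      ∑ s ∈ Finset.univ.filter (fun s : Finset ι => i ∈ s),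
        volume.real (Set.Ico 0 r ∩ f ⁻¹' {s} ∩ B) := by
    intro B hB i
    rw [hdis B i, measureReal_biUnion_finset (h := fun s _ => measure_ne_top_of_subset
        (Set.inter_subset_left.trans Set.inter_subset_left) (by simp : volume (Set.Ico 0 r) ≠ ⊤))]
    · intro s _ t _ hst
      refine Set.disjoint_left.2 ?_
      rintro x ⟨⟨-, hx⟩, -⟩ ⟨⟨-, hx'⟩, -⟩
      exact hst (hx.symm.trans hx')
    · exact fun s _ => (hQ s).inter hB
  have hmeas : Measurable fun x => θ (f x) x := by
    intro A hA
    have : (fun x => θ (f x) x) ⁻¹' A = ⋃ s, f ⁻¹' {s} ∩ θ s ⁻¹' A := by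
      ext x; simp
    rw [this]
    exact MeasurableSet.iUnion fun s => (hf s).inter (hθ s hA)
  refine ⟨fun x => θ (f x) x, hmeas, ?_⟩
  · intro i A hA hAr
    have huniv : volume.real (P i) = ∑ s ∈ Finset.univ.filter (fun s : Finset ι => i ∈ s),
        volume.real (Set.Ico 0 r ∩ f ⁻¹' {s}) := by
      simpa using hsum Set.univ MeasurableSet.univ i
    rw [hsum _ (hmeas hA) i, huniv, Finset.sum_div, Finset.sum_mul]
    refine Finset.sum_congr rfl fun s _ => ?_
    rw [← h s A hA hAr]
    congr 1
    ext x
    simp only [Set.mem_inter_iff, Set.mem_preimage, Set.mem_singleton_iff]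
    constructor
    · rintro ⟨⟨h1, rfl⟩, h2⟩; exact ⟨⟨h1, rfl⟩, h2⟩
    · rintro ⟨⟨h1, rfl⟩, h2⟩; exact ⟨⟨h1, rfl⟩, h2⟩

/-! ### Upper bound -/

/-- Vertices away from the precolored set use their spread-out `k`-coloring; a neighbor of a
precolored `w` uses its own colors and the `ε` spare ones, outside `P w`. By uniformity this
leaves measure `(1 + ε) (1 - 1 / (k + ε))`, which is at least `1` exactly under the
hypothesis. -/
theorem extendsAll_of_le {k ε : ℝ} (hk : 2 ≤ k) (hk3 : k < 3) (hε : 0 < ε)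
    (h : 1 ≤ ε * (k - 1 + ε)) : ExtendsAll k 4 ε := by
  classical
  rintro V _ G W ⟨c, hck, hcm, hc1, hcd⟩ hW P hP
  set r := k + ε with hr
  have hr0 : 0 < r := by linarith
  obtain ⟨θ, hθ, hspread⟩ := exists_spread hr0
    (fun i : Option W => i.elim (Set.Ico 0 r) fun w => P w)
    (by rintro (_ | w); exacts [measurableSet_Ico, (hP w w.2).2.1])
    (by rintro (_ | w); exacts [subset_rfl, (hP w w.2).1])
  have hall : ∀ A, MeasurableSet A → A ⊆ Set.Ico 0 r →
      volume.real (Set.Ico 0 r ∩ θ ⁻¹' A) = volume.real A := by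
    intro A hA hAr
    have := hspread none A hA hAr
    simp only [Option.elim, Real.volume_real_Ico_of_le hr0.le, sub_zero, div_self hr0.ne',
      one_mul] at this
    exact this
  have hPw : ∀ w ∈ W, ∀ A, MeasurableSet A → A ⊆ Set.Ico 0 r →
      volume.real (P w ∩ θ ⁻¹' A) = 1 / r * volume.real A := by
    intro w hw A hA hAr
    have := hspread (some ⟨w, hw⟩) A hA hAr
    simpa [measureReal_def, (hP w hw).2.2] using this
  have hck' : ∀ v, c v ⊆ Set.Ico 0 r := fun v =>
    (hck v).trans (Set.Ico_subset_Ico_right (by linarith))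
  -- the color set available to a neighbor `v` of `w`: own and spare colors, without `P w`
  have hD : ∀ w ∈ W, ∀ v, ∃ D ⊆ (Set.Ico 0 r ∩ θ ⁻¹' (c v ∪ Set.Ico k r)) \ P w,
      MeasurableSet D ∧ volume D = 1 := by
    intro w hw v
    have hAm : MeasurableSet (c v ∪ Set.Ico k r) := (hcm v).union measurableSet_Ico
    have hAr : c v ∪ Set.Ico k r ⊆ Set.Ico 0 r :=
      Set.union_subset (hck' v) (Set.Ico_subset_Ico_left (by linarith))
    have hAd : Disjoint (c v) (Set.Ico k r) :=
      Set.disjoint_left.2 fun x hx hx' => absurd (hck v hx).2 (not_lt.2 hx'.1)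
    have hvol : volume.real (c v ∪ Set.Ico k r) = 1 + ε := by
      rw [measureReal_union hAd measurableSet_Ico (by simp [hc1]) (by simp),
        Real.volume_real_Ico_of_le (by linarith), measureReal_def, hc1]
      simp [hr]
    refine exists_subset_one ((measurableSet_Ico.inter (hθ hAm)).diff (hP w hw).2.1)
      (Set.sdiff_subset.trans Set.inter_subset_left) ?_
    have hsplit := measureReal_sdiff_add_inter (μ := volume)
      (s := Set.Ico 0 r ∩ θ ⁻¹' (c v ∪ Set.Ico k r)) (hP w hw).2.1
      (measure_ne_top_of_subset Set.inter_subset_left (by simp : volume (Set.Ico 0 r) ≠ ⊤))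
    have hint : Set.Ico 0 r ∩ θ ⁻¹' (c v ∪ Set.Ico k r) ∩ P w =
        P w ∩ θ ⁻¹' (c v ∪ Set.Ico k r) := by
      ext x
      constructor
      · rintro ⟨⟨-, h1⟩, h2⟩; exact ⟨h2, h1⟩
      · rintro ⟨h2, h1⟩; exact ⟨⟨(hP w hw).1 h2, h1⟩, h2⟩
    rw [hint, hall _ hAm hAr, hPw w hw _ hAm hAr, hvol] at hsplit
    have : 1 / r * (1 + ε) ≤ ε := by
      rw [div_mul_eq_mul_div, one_mul, div_le_iff₀ hr0]
      rw [hr]; nlinarith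
    linarith
  choose D hDsub hDm hD1 using hD
  let col : V → Set ℝ := fun v =>
    if v ∈ W then P v
    else if hv : ∃ w, w ∈ W ∧ G.Adj w v then D hv.choose hv.choose_spec.1 v
    else Set.Ico 0 r ∩ θ ⁻¹' c v
  have hcolW : ∀ v ∈ W, col v = P v := fun v hv => if_pos hv
  have hcolN : ∀ v ∉ W, (∃ w, w ∈ W ∧ G.Adj w v) →
      ∃ w, ∃ hw : w ∈ W, G.Adj w v ∧ col v = D w hw v := fun v hv hN =>
    ⟨hN.choose, hN.choose_spec.1, hN.choose_spec.2, by simp only [col]; rw [if_neg hv, dif_pos hN]⟩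
  have hcolG : ∀ v ∉ W, (¬ ∃ w, w ∈ W ∧ G.Adj w v) → col v = Set.Ico 0 r ∩ θ ⁻¹' c v :=
    fun v hv hN => by simp only [col]; rw [if_neg hv, dif_neg hN]
  have hWW : ∀ u ∈ W, ∀ v ∈ W, ¬ G.Adj u v := by
    intro u hu v hv huv
    have := hW u hu v hv huv.ne (.cons huv .nil)
    simp at this
  have hWN : ∀ u ∈ W, ∀ v ∉ W, G.Adj u v → Disjoint (col u) (col v) := by
    intro u hu v hv huv
    obtain ⟨w, hw, hwv, hcv⟩ := hcolN v hv ⟨u, hu, huv⟩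
    have huw : u = w := by
      by_contra hne
      have := hW u hu w hw hne (.cons huv (.cons hwv.symm .nil))
      simp at this
    subst huw
    rw [hcolW u hu, hcv]
    exact Set.disjoint_left.2 fun x hx hx' => (hDsub u hw v hx').2 hx
  have hNG : ∀ u ∉ W, (∃ w, w ∈ W ∧ G.Adj w u) → ∀ v ∉ W, (¬ ∃ w, w ∈ W ∧ G.Adj w v) →
      G.Adj u v → Disjoint (col u) (col v) := by
    intro u hu hNu v hv hNv huv
    obtain ⟨w, hw, hwu, hcu⟩ := hcolN u hu hNu
    rw [hcu, hcolG v hv hNv]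
    refine Set.disjoint_left.2 fun x hx hx' => ?_
    rcases (hDsub w hw u hx).1.2 with h1 | h1
    · exact Set.disjoint_left.1 (hcd u v huv) h1 hx'.2
    · exact absurd (hck v hx'.2).2 (not_lt.2 h1.1)
  -- neighbors of precolored vertices are pairwise nonadjacent, so they may share spare colors
  have hNN : ∀ u ∉ W, (∃ w, w ∈ W ∧ G.Adj w u) → ∀ v ∉ W, (∃ w, w ∈ W ∧ G.Adj w v) →
      ¬ G.Adj u v := by
    rintro u hu ⟨w, hw, hwu⟩ v hv ⟨w', hw', hwv⟩ huv
    have hww : w = w' := by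
      by_contra hne
      have := hW w hw w' hw' hne (.cons hwu (.cons huv (.cons hwv.symm .nil)))
      simp at this
    subst hww
    -- `u`, `v`, `w` form a triangle, which needs measure 3 > k
    have hd1 : Disjoint (c u ∪ c v) (c w) :=
      Disjoint.union_left (hcd u w hwu.symm) (hcd v w hwv.symm)
    have h3 : volume (c u ∪ c v ∪ c w) = 3 := by
      rw [measure_union hd1 (hcm w), measure_union (hcd u v huv) (hcm v), hc1, hc1, hc1]
      norm_num
    have hle : volume (c u ∪ c v ∪ c w) ≤ volume (Set.Ico 0 k) :=
      measure_mono (Set.union_subset (Set.union_subset (hck u) (hck v)) (hck w))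
    rw [h3, Real.volume_Ico, sub_zero] at hle
    have := (ENNReal.ofNat_le_ofReal (n := 3)).1 hle
    norm_num at this
    linarith
  refine ⟨col, ⟨?_, ?_, ?_, ?_⟩, hcolW⟩
  · intro v
    by_cases hv : v ∈ W
    · rw [hcolW v hv]; exact (hP v hv).1
    by_cases hN : ∃ w, w ∈ W ∧ G.Adj w v
    · obtain ⟨w, hw, -, hcv⟩ := hcolN v hv hN
      rw [hcv]; exact (hDsub w hw v).trans (Set.sdiff_subset.trans Set.inter_subset_left)
    · rw [hcolG v hv hN]; exact Set.inter_subset_left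
  · intro v
    by_cases hv : v ∈ W
    · rw [hcolW v hv]; exact (hP v hv).2.1
    by_cases hN : ∃ w, w ∈ W ∧ G.Adj w v
    · obtain ⟨w, hw, -, hcv⟩ := hcolN v hv hN
      rw [hcv]; exact hDm w hw v
    · rw [hcolG v hv hN]; exact measurableSet_Ico.inter (hθ (hcm v))
  · intro v
    by_cases hv : v ∈ W
    · rw [hcolW v hv]; exact (hP v hv).2.2
    by_cases hN : ∃ w, w ∈ W ∧ G.Adj w v
    · obtain ⟨w, hw, -, hcv⟩ := hcolN v hv hN
      rw [hcv]; exact hD1 w hw v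
    · rw [hcolG v hv hN, ← ENNReal.toReal_eq_one_iff, ← measureReal_def,
        hall _ (hcm v) (hck' v), measureReal_def, hc1, ENNReal.toReal_one]
  · intro u v huv
    by_cases hu : u ∈ W <;> by_cases hv : v ∈ W
    · exact absurd huv (hWW u hu v hv)
    · exact hWN u hu v hv huv
    · exact (hWN v hv u hu huv.symm).symm
    by_cases hNu : ∃ w, w ∈ W ∧ G.Adj w u <;> by_cases hNv : ∃ w, w ∈ W ∧ G.Adj w v
    · exact absurd huv (hNN u hu hNu v hv hNv)
    · exact hNG u hu hNu v hv hNv huv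
    · exact (hNG v hv hNv u hu hNu huv.symm).symm
    · rw [hcolG u hu hNu, hcolG v hv hNv]
      exact ((hcd u v huv).preimage θ).mono Set.inter_subset_right Set.inter_subset_right

/-! ### Arcs of a cyclic group and the circular clique -/

/-- The cyclic interval `{i, i + 1, …, i + m - 1}` in `ℤ/n`. -/
def arc (n m : ℕ) [NeZero n] (i : ZMod n) : Finset (ZMod n) :=
  Finset.univ.filter fun t => (t - i).val < m

theorem mem_arc {n m : ℕ} [NeZero n] {i t : ZMod n} : t ∈ arc n m i ↔ (t - i).val < m := by
  simp [arc]

theorem card_val_lt {n m : ℕ} [NeZero n] (h : m ≤ n) :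
    (Finset.univ.filter fun s : ZMod n => s.val < m).card = m := by
  conv_rhs => rw [← Finset.card_range m]
  refine Finset.card_nbij' (fun s => s.val) (fun t => (t : ZMod n)) ?_ ?_ ?_ ?_
  · intro s hs
    simpa using hs
  · intro t ht
    have ht : t < m := by simpa using ht
    simpa [ZMod.val_natCast_of_lt (ht.trans_le h)] using ht
  · intro s _
    simp
  · intro t ht
    have ht : t < m := by simpa using ht
    simp [ZMod.val_natCast_of_lt (ht.trans_le h)]

theorem card_arc {n m : ℕ} [NeZero n] (h : m ≤ n) (i : ZMod n) : (arc n m i).card = m := by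
  conv_rhs => rw [← card_val_lt h]
  exact Finset.card_equiv (Equiv.subRight i) (by simp [mem_arc])

theorem card_mem_arc {n m : ℕ} [NeZero n] (h : m ≤ n) (t : ZMod n) :
    (Finset.univ.filter fun i => t ∈ arc n m i).card = m := by
  conv_rhs => rw [← card_val_lt h]
  exact Finset.card_equiv (Equiv.subLeft t) (by simp [mem_arc])

theorem mem_arc_self {n m : ℕ} [NeZero n] (hm : 0 < m) (i : ZMod n) : i ∈ arc n m i := by
  simpa [mem_arc] using hm

theorem disjoint_arc_add {n m : ℕ} [NeZero n] (h : 2 * m ≤ n) (i : ZMod n) :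
    Disjoint (arc n m i) (arc n m (i + m)) := by
  refine Finset.disjoint_left.2 fun t h1 h2 => ?_
  rw [mem_arc] at h1 h2
  have hmv : (m : ZMod n).val = m := ZMod.val_natCast_of_lt (by omega)
  have h3 : t - i = (t - (i + m)) + (m : ZMod n) := by ring
  rw [h3, ZMod.val_add_of_lt (by omega)] at h1
  omega

/-- Katona's cycle lemma: at most `m` arcs of length `m` in `ℤ/n`, `n ≥ 2 * m`, can be pairwise
intersecting. Relative to a fixed member `i₀`, all others start less than `m` steps before or
after it, and the starting points `i₀ + s - m` and `i₀ + s` give disjoint arcs. -/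
theorem card_le_of_intersecting {n m : ℕ} [NeZero n] (hm : 0 < m) (h : 2 * m ≤ n)
    (I : Finset (ZMod n)) (hI : ∀ i ∈ I, ∀ j ∈ I, ¬ Disjoint (arc n m i) (arc n m j)) :
    I.card ≤ m := by
  rcases I.eq_empty_or_nonempty with rfl | ⟨i₀, hi₀⟩
  · simp
  have hcase : ∀ i ∈ I, (i - i₀).val < m ∨ (i - i₀ + m).val < m := by
    intro i hi
    obtain ⟨t, h1, h2⟩ := Finset.not_disjoint_iff.1 (hI i₀ hi₀ i hi)
    rw [mem_arc] at h1 h2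
    have e : i - i₀ = ((t - i₀).val : ZMod n) - ((t - i).val : ZMod n) := by simp
    rcases le_or_gt (t - i).val (t - i₀).val with hle | hgt
    · left
      rw [e, ← Nat.cast_sub hle, ZMod.val_natCast_of_lt (by omega)]
      omega
    · right
      have e2 : i - i₀ + m = ((m + (t - i₀).val - (t - i).val : ℕ) : ZMod n) := by
        rw [e, Nat.cast_sub (by omega)]
        push_cast
        ring
      rw [e2, ZMod.val_natCast_of_lt (by omega)]
      omega
  conv_rhs => rw [← Finset.card_range m]
  have hcross : ∀ i ∈ I, ∀ j ∈ I, (i - i₀).val ≠ (j - i₀ + m).val := by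
    intro i hi j hj hij
    have h1 := ZMod.val_injective n hij
    have h2 : i = j + m := by
      linear_combination h1
    subst h2
    exact hI _ hj _ hi (disjoint_arc_add h j)
  refine Finset.card_le_card_of_injOn
    (fun i => if (i - i₀).val < m then (i - i₀).val else (i - i₀ + m).val) ?_ ?_
  · intro i hi
    have := hcase i hi
    simp only [Finset.coe_range, Set.mem_Iio]
    split_ifs with hlt
    · exact hlt
    · exact this.resolve_left hlt
  · intro i hi j hj hij
    simp only at hij
    split_ifs at hij
    · have := ZMod.val_injective n hij
      linear_combination this
    · exact absurd hij (hcross i hi j hj)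
    · exact absurd hij.symm (hcross j hj i hi)
    · have := ZMod.val_injective n hij
      linear_combination this

/-- Isoperimetry in the circular clique, where `i` and `j` are adjacent when their arcs are
disjoint: for an independent set `I` with neighborhood `N`, `|I ∪ N| ≥ (n / m) |I|`. For each
point `t`, adding to `I` the arcs through `t` outside `I ∪ N` keeps it independent, so `I ∪ N`
contains at least `|I|` arcs through `t`; then sum over `t`. -/
theorem card_neighbors {n m : ℕ} [NeZero n] (hm : 0 < m) (h : 2 * m ≤ n)
    (I : Finset (ZMod n)) (hI : ∀ i ∈ I, ∀ j ∈ I, ¬ Disjoint (arc n m i) (arc n m j)) :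
    n * I.card ≤ m * (I.card +
      (Finset.univ.filter fun j => ∃ i ∈ I, Disjoint (arc n m i) (arc n m j)).card) := by
  classical
  set N := Finset.univ.filter fun j => ∃ i ∈ I, Disjoint (arc n m i) (arc n m j) with hN
  have hstar : ∀ t : ZMod n, I.card ≤ ((I ∪ N).filter fun j => t ∈ arc n m j).card := by
    intro t
    set J := Finset.univ.filter fun j => t ∈ arc n m j with hJ
    have hJcard : J.card = m := card_mem_arc (by omega) t
    have hle : (I ∪ (J \ (I ∪ N))).card ≤ m := by
      refine card_le_of_intersecting hm h _ fun i hi j hj => ?_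
      have hJJ : ∀ i ∈ J, ∀ j ∈ J, ¬ Disjoint (arc n m i) (arc n m j) := fun i hi j hj =>
        Finset.not_disjoint_iff.2 ⟨t, by simpa [hJ] using hi, by simpa [hJ] using hj⟩
      have hIJ : ∀ i ∈ I, ∀ j ∈ J \ (I ∪ N), ¬ Disjoint (arc n m i) (arc n m j) := by
        intro i hi j hj hd
        refine (Finset.mem_sdiff.1 hj).2 (Finset.mem_union_right _ ?_)
        simp only [hN, Finset.mem_filter, Finset.mem_univ, true_and]
        exact ⟨i, hi, hd⟩
      rcases Finset.mem_union.1 hi with hi | hi <;> rcases Finset.mem_union.1 hj with hj | hj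
      · exact hI i hi j hj
      · exact hIJ i hi j hj
      · exact fun hd => hIJ j hj i hi hd.symm
      · exact hJJ i (Finset.mem_sdiff.1 hi).1 j (Finset.mem_sdiff.1 hj).1
    have hd : Disjoint I (J \ (I ∪ N)) :=
      Finset.disjoint_left.2 fun x hx hx' =>
        (Finset.mem_sdiff.1 hx').2 (Finset.mem_union_left _ hx)
    rw [Finset.card_union_of_disjoint hd] at hle
    have h2 := Finset.card_sdiff_add_card_inter J (I ∪ N)
    have h3 : J ∩ (I ∪ N) = (I ∪ N).filter fun j => t ∈ arc n m j := by
      ext x; simp [hJ, and_comm]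
    rw [h3] at h2
    omega
  calc n * I.card = ∑ _t : ZMod n, I.card := by simp [ZMod.card]
    _ ≤ ∑ t : ZMod n, ((I ∪ N).filter fun j => t ∈ arc n m j).card :=
      Finset.sum_le_sum fun t _ => hstar t
    _ = ∑ j ∈ I ∪ N, (Finset.univ.filter fun t => t ∈ arc n m j).card :=
      Finset.sum_card_bipartiteAbove_eq_sum_card_bipartiteBelow (fun t j => t ∈ arc n m j)
    _ = ∑ j ∈ I ∪ N, m := by
      refine Finset.sum_congr rfl fun j _ => ?_
      rw [Finset.filter_mem_eq_inter, Finset.univ_inter, card_arc (by omega)]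
    _ = m * (I ∪ N).card := by rw [Finset.sum_const, smul_eq_mul, mul_comm]
    _ ≤ m * (I.card + N.card) := Nat.mul_le_mul_left _ (Finset.card_union_le _ _)

/-- Realization of `S ⊆ ℤ/n` inside `[0, n/m)`: the residue `t` stands for the interval
`[t/m, (t+1)/m)`. -/
def cells (n m : ℕ) [NeZero n] (S : Finset (ZMod n)) : Set ℝ :=
  {x | x ∈ Set.Ico 0 ((n : ℝ) / m) ∧ ((⌊m * x⌋₊ : ℕ) : ZMod n) ∈ S}

theorem cells_eq_iUnion {n m : ℕ} [NeZero n] (hm : 0 < m) (S : Finset (ZMod n)) :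
    cells n m S = ⋃ t ∈ S, Set.Ico ((t.val : ℝ) / m) ((t.val + 1 : ℝ) / m) := by
  have hm' : (0 : ℝ) < m := by exact_mod_cast hm
  ext x
  simp only [cells, Set.mem_ofPred_eq, Set.mem_iUnion, Set.mem_Ico, exists_prop,
    div_le_iff₀ hm', lt_div_iff₀ hm']
  constructor
  · rintro ⟨⟨h0, h1⟩, h2⟩
    have hfl : ⌊(m : ℝ) * x⌋₊ < n := by
      rw [Nat.floor_lt (by positivity), mul_comm]; exact h1
    refine ⟨_, h2, ?_⟩
    rw [ZMod.val_natCast_of_lt hfl, mul_comm x]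
    exact ⟨Nat.floor_le (by positivity), Nat.lt_floor_add_one _⟩
  · rintro ⟨t, ht, h1, h2⟩
    have h0 : 0 ≤ x := by
      have : (0 : ℝ) ≤ t.val := by positivity
      exact nonneg_of_mul_nonneg_left (this.trans h1) hm'
    have hfl : ⌊(m : ℝ) * x⌋₊ = t.val := by
      rw [Nat.floor_eq_iff (by positivity), mul_comm]; exact ⟨h1, h2⟩
    refine ⟨⟨h0, h2.trans_le ?_⟩, ?_⟩
    · exact_mod_cast ZMod.val_lt t
    · rw [hfl]; simpa using ht

theorem measurableSet_cells {n m : ℕ} [NeZero n] (hm : 0 < m) (S : Finset (ZMod n)) :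
    MeasurableSet (cells n m S) := by
  rw [cells_eq_iUnion hm]
  exact Finset.measurableSet_biUnion _ fun _ _ => measurableSet_Ico

theorem volume_cells {n m : ℕ} [NeZero n] (hm : 0 < m) (S : Finset (ZMod n)) (hS : S.card = m) :
    volume (cells n m S) = 1 := by
  have hm' : (0 : ℝ) < m := by exact_mod_cast hm
  rw [cells_eq_iUnion hm, measure_biUnion_finset]
  · simp only [Real.volume_Ico]
    have : ∀ t : ZMod n, ((t.val + 1 : ℝ) / m) - (t.val : ℝ) / m = 1 / m := fun t => by ring
    simp only [this, Finset.sum_const, hS, nsmul_eq_mul]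
    rw [← ENNReal.ofReal_natCast, ← ENNReal.ofReal_mul hm'.le, mul_one_div_cancel hm'.ne',
      ENNReal.ofReal_one]
  · intro s _ t _ hst
    refine Set.disjoint_left.2 fun x hx hx' => hst ?_
    simp only [Set.mem_Ico, div_le_iff₀ hm', lt_div_iff₀ hm'] at hx hx'
    have h1 : s.val < t.val + 1 := by exact_mod_cast hx.1.trans_lt hx'.2
    have h2 : t.val < s.val + 1 := by exact_mod_cast hx'.1.trans_lt hx.2
    exact ZMod.val_injective n (by omega)
  · exact fun _ _ => measurableSet_Ico

theorem disjoint_cells {n m : ℕ} [NeZero n] {S T : Finset (ZMod n)} (h : Disjoint S T) :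
    Disjoint (cells n m S) (cells n m T) :=
  Set.disjoint_left.2 fun _ hx hy => Finset.disjoint_left.1 h hx.2 hy.2

/-! ### Lower bound -/

/-- Vertices of the extremal graph: the core `ℤ/p`, then the middle vertices `(B, j)`, then the
pendant vertices `(B, j)`. -/
abbrev GadgetVertex (p a : ℕ) : Type :=
  ZMod p ⊕ (ZMod p × ZMod a) ⊕ (ZMod p × ZMod a)

/-- The extremal graph. The core is the circular clique on `ℤ/p` (disjoint arcs of length `q`
are adjacent); the middle vertex `(B, j)` is attached to the core as a twin of `B`, and the pendant
vertex `(B, j)` hangs from it. -/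
def gadget (p q a : ℕ) [NeZero p] (hq : 0 < q) : SimpleGraph (GadgetVertex p a) where
  Adj
    | .inl i, .inl j => Disjoint (arc p q i) (arc p q j)
    | .inl i, .inr (.inl y) => Disjoint (arc p q i) (arc p q y.1)
    | .inr (.inl y), .inl i => Disjoint (arc p q y.1) (arc p q i)
    | .inr (.inl y), .inr (.inr z) => y = z
    | .inr (.inr z), .inr (.inl y) => z = y
    | _, _ => False
  symm := ⟨by
    rintro (i | y | z) (j | y' | z') h
    all_goals first | exact h.elim | exact Disjoint.symm h | exact Eq.symm h⟩
  loopless := ⟨by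
    rintro (i | y | z) h
    · exact Finset.disjoint_left.1 h (mem_arc_self hq i) (mem_arc_self hq i)
    · exact h
    · exact h⟩

/-- A function growing by at most one along edges bounds walk lengths from below. -/
theorem walk_length_ge {V : Type*} {G : SimpleGraph V} (f : V → ℕ)
    (hf : ∀ u v, G.Adj u v → f v ≤ f u + 1) {u v : V} (w : G.Walk u v) :
    f v ≤ f u + w.length := by
  induction w with
  | nil => simp
  | cons h _ ih =>
    have := hf _ _ h
    simp only [SimpleGraph.Walk.length_cons]
    omega

theorem gadget_dist (p q a : ℕ) [NeZero p] (hq : 0 < q) :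
    DistAtLeast (gadget p q a hq) 4 (Set.range fun z => .inr (.inr z)) := by
  classical
  rintro _ ⟨x, rfl⟩ _ ⟨y, rfl⟩ hxy w
  have hne : y ≠ x := fun h => hxy (by rw [h])
  -- distance from the pendant vertex `x`, collapsing the core to one point
  let f : GadgetVertex p a → ℕ
    | .inl _ => 2
    | .inr (.inl z) => if z = x then 1 else 3
    | .inr (.inr z) => if z = x then 0 else 4
  have := walk_length_ge f (by
    rintro (i | y | z) (j | y' | z') h
    all_goals first | exact h.elim | skip
    all_goals simp only [f]
    · omega
    · split_ifs <;> omega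
    · split_ifs <;> omega
    · obtain rfl : y = z' := h
      split_ifs <;> omega
    · obtain rfl : z = y' := h
      split_ifs <;> omega) w
  simpa [f, hne] using this

theorem gadget_fracColorable (p q a : ℕ) [NeZero p] (hq : 0 < q) (hpq : 2 * q ≤ p) :
    FracColorable (gadget p q a hq) ((p : ℝ) / q) := by
  let c : GadgetVertex p a → Set ℝ
    | .inl i => cells p q (arc p q i)
    | .inr (.inl y) => cells p q (arc p q y.1)
    | .inr (.inr z) => cells p q (arc p q (z.1 + q))
  refine ⟨c, ?_, ?_, ?_, ?_⟩
  · rintro (i | y | z) x hx <;> exact hx.1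
  · rintro (i | y | z) <;> exact measurableSet_cells hq _
  · rintro (i | y | z) <;> exact volume_cells hq _ (card_arc (by omega) _)
  · rintro (i | y | z) (j | y' | z') h
    all_goals first | exact h.elim | exact disjoint_cells h | skip
    · obtain rfl : y = z' := h
      exact disjoint_cells (disjoint_arc_add hpq _)
    · obtain rfl : z = y' := h
      exact (disjoint_cells (disjoint_arc_add hpq _)).symm

open scoped Classical in
/-- Integrating the number of sets through a point counts sets of measure one. -/
theorem integral_count {ι : Type*} [Fintype ι] {r : ℝ} (S : ι → Set ℝ)
    (hSr : ∀ i, S i ⊆ Set.Ico 0 r) (hS : ∀ i, MeasurableSet (S i)) (h1 : ∀ i, volume (S i) = 1) :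
    IntegrableOn (fun x => ((Finset.univ.filter fun i => x ∈ S i).card : ℝ)) (Set.Ico 0 r) ∧
    ∫ x in Set.Ico 0 r, ((Finset.univ.filter fun i => x ∈ S i).card : ℝ) = Fintype.card ι := by
  have he : (fun x => ((Finset.univ.filter fun i => x ∈ S i).card : ℝ)) =
      fun x => ∑ i, (S i).indicator (fun _ => (1 : ℝ)) x := by
    funext x
    simp [Set.indicator_apply, Finset.sum_boole]
  have hint : ∀ i, IntegrableOn ((S i).indicator fun _ => (1 : ℝ)) (Set.Ico 0 r) := fun i =>
    (integrableOn_const (by simp)).indicator (hS i)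
  rw [he]
  refine ⟨integrable_finsetSum _ fun i _ => hint i, ?_⟩
  rw [integral_finsetSum _ fun i _ => hint i]
  have : ∀ i, ∫ x in Set.Ico 0 r, (S i).indicator (fun _ => (1 : ℝ)) x = 1 := by
    intro i
    rw [setIntegral_indicator (hS i), Set.inter_eq_right.2 (hSr i)]
    simp [measureReal_def, h1]
  simp [this]

/-- With `k = p / q` and `k + ε = a / b`, precolor the pendant vertices `(B, j)` by all rotations
`j` of an interval of length one. At a color `x`, let `I` be the core vertices using `x` and `N` their
neighborhood. The middle vertices using `x` have `B ∉ N` and `x` outside the `j`-th interval, so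
there are at most `(p - |N|) (a - b)` of them. Bounding `|N|` by isoperimetry and integrating over
`x` gives the inequality. -/
theorem le_of_extendsAll {p q a b : ℕ} (hq : 0 < q) (hb : 0 < b) (hpq : 2 * q ≤ p) (hab : b ≤ a)
    (h : ExtendsAll ((p : ℝ) / q) 4 ((a : ℝ) / b - (p : ℝ) / q)) :
    1 ≤ ((a : ℝ) / b - (p : ℝ) / q) * ((a : ℝ) / b - 1) := by
  classical
  have : NeZero p := ⟨by omega⟩
  have : NeZero a := ⟨by omega⟩
  let P : GadgetVertex p a → Set ℝ
    | .inr (.inr z) => cells a b (arc a b z.2)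
    | _ => ∅
  obtain ⟨c, ⟨hcr, hcm, hc1, hcd⟩, hcP⟩ := h _ (gadget p q a hq) _
    (gadget_fracColorable p q a hq hpq) (gadget_dist p q a hq) P (by
      rintro _ ⟨z, rfl⟩
      rw [add_sub_cancel]
      exact ⟨fun x hx => hx.1, measurableSet_cells hb _, volume_cells hb _ (card_arc hab _)⟩)
  rw [add_sub_cancel] at hcr
  set r : ℝ := (a : ℝ) / b with hr
  have hp' : (0 : ℝ) < p := by have : 0 < p := by omega
                               exact_mod_cast this
  have hq' : (0 : ℝ) < q := by exact_mod_cast hq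
  have hb' : (0 : ℝ) < b := by exact_mod_cast hb
  have hab' : (b : ℝ) ≤ a := by exact_mod_cast hab
  have ha' : (0 : ℝ) < a := hb'.trans_le hab'
  have hqp' : (q : ℝ) ≤ p := by
    have : q ≤ p := by omega
    exact_mod_cast this
  have hr0 : 0 < r := by positivity
  let nI : ℝ → ℝ := fun x =>
    ((Finset.univ.filter fun i : ZMod p => x ∈ c (.inl i)).card : ℝ)
  let nV : ℝ → ℝ := fun x =>
    ((Finset.univ.filter fun y : ZMod p × ZMod a => x ∈ c (.inr (.inl y))).card : ℝ)
  -- `nI x` and `nV x` count core and middle vertices using the color `x`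
  have hpt : ∀ x ∈ Set.Ico 0 r, q * nV x + (a - b) * (p - q) * nI x ≤ (a - b) * p * q := by
    intro x hx
    set I := Finset.univ.filter fun i : ZMod p => x ∈ c (.inl i) with hI
    set N := Finset.univ.filter fun j => ∃ i ∈ I, Disjoint (arc p q i) (arc p q j) with hN
    have hiso : p * I.card ≤ q * (I.card + N.card) := by
      refine card_neighbors hq hpq I fun i hi j hj hd => ?_
      exact Set.disjoint_left.1 (hcd (.inl i) (.inl j) hd) (by simpa [hI] using hi)
        (by simpa [hI] using hj)
    set t : ZMod a := ((⌊b * x⌋₊ : ℕ) : ZMod a) with ht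
    have hsub : (Finset.univ.filter fun y : ZMod p × ZMod a => x ∈ c (.inr (.inl y))) ⊆
        Nᶜ ×ˢ (Finset.univ.filter fun j => t ∈ arc a b j)ᶜ := by
      intro y hy
      have hy : x ∈ c (.inr (.inl y)) := by simpa using hy
      simp only [Finset.mem_product, Finset.mem_compl, hN, Finset.mem_filter, Finset.mem_univ,
        true_and]
      constructor
      · rintro ⟨i, hi, hd⟩
        exact Set.disjoint_left.1 (hcd (.inl i) (.inr (.inl y)) hd) (by simpa [hI] using hi) hy
      · intro htj
        have hw : x ∈ c (.inr (.inr y)) := by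
          rw [hcP _ ⟨y, rfl⟩]
          exact ⟨hx, htj⟩
        exact Set.disjoint_left.1 (hcd (.inr (.inl y)) (.inr (.inr y)) rfl) hy hw
    have hcard := Finset.card_le_card hsub
    rw [Finset.card_product, Finset.card_compl, Finset.card_compl, card_mem_arc hab,
      ZMod.card, ZMod.card] at hcard
    have hNp : N.card ≤ p := by simpa [ZMod.card] using Finset.card_le_univ N
    have hV : nV x ≤ (p - N.card) * (a - b) := by
      have : nV x ≤ (((p - N.card) * (a - b) : ℕ) : ℝ) := Nat.cast_le.2 hcard
      rwa [Nat.cast_mul, Nat.cast_sub hNp, Nat.cast_sub hab] at this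
    have hiso' : (p : ℝ) * nI x ≤ q * (nI x + N.card) := by
      have : ((p * I.card : ℕ) : ℝ) ≤ ((q * (I.card + N.card) : ℕ) : ℝ) := Nat.cast_le.2 hiso
      push_cast at this
      exact this
    have h1 : q * nV x ≤ q * ((p - N.card) * (a - b)) := mul_le_mul_of_nonneg_left hV hq'.le
    have h2 := mul_le_mul_of_nonneg_left hiso' (sub_nonneg.2 hab')
    linarith
  obtain ⟨hIi, hIe⟩ := integral_count (fun i : ZMod p => c (.inl i))
    (fun _ => hcr _) (fun _ => hcm _) (fun _ => hc1 _)
  obtain ⟨hVi, hVe⟩ := integral_count (fun y : ZMod p × ZMod a => c (.inr (.inl y)))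
    (fun _ => hcr _) (fun _ => hcm _) (fun _ => hc1 _)
  have hmono := setIntegral_mono_on (μ := volume)
    ((hVi.const_mul (q : ℝ)).add (hIi.const_mul (((a : ℝ) - b) * (p - q))))
    (integrableOn_const (by simp)) measurableSet_Ico hpt
  simp only [Pi.add_apply] at hmono
  rw [integral_add (hVi.const_mul _) (hIi.const_mul _), integral_const_mul, integral_const_mul,
    hIe, hVe, setIntegral_const, Real.volume_real_Ico_of_le hr0.le, smul_eq_mul, sub_zero,
    Fintype.card_prod, ZMod.card, ZMod.card] at hmono
  push_cast at hmono
  have hra : (a : ℝ) = r * b := by rw [hr]; field_simp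
  set k : ℝ := (p : ℝ) / q with hk
  have hkp : (p : ℝ) = k * q := by rw [hk]; field_simp
  rw [hra, hkp] at hmono
  have hk0 : 0 < k := by positivity
  have hfac : 0 < q * q * k * b := by positivity
  have : (q * q * k * b) * (r + (r - 1) * (k - 1)) ≤ (q * q * k * b) * ((r - 1) * r) := by
    nlinarith [hmono]
  have := le_of_mul_le_mul_left this hfac
  linarith

/-- For every rational `k ∈ [2,3)`, `g(k,4) = (√((k-1)²+4) - k + 1)/2`. -/
theorem g_k_4 (k : ℚ) (hk1 : 2 ≤ k) (hk2 : k < 3) :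
    gExt (k : ℝ) 4 = (Real.sqrt (((k : ℝ) - 1) ^ 2 + 4) - (k : ℝ) + 1) / 2 := by
  have hk1' : (2 : ℝ) ≤ k := by exact_mod_cast hk1
  have hk2' : (k : ℝ) < 3 := by exact_mod_cast hk2
  set g := (Real.sqrt (((k : ℝ) - 1) ^ 2 + 4) - (k : ℝ) + 1) / 2 with hg
  have hsq : Real.sqrt (((k : ℝ) - 1) ^ 2 + 4) ^ 2 = ((k : ℝ) - 1) ^ 2 + 4 :=
    Real.sq_sqrt (by positivity)
  have hg0 : 0 < g := by
    have : (k : ℝ) - 1 < Real.sqrt (((k : ℝ) - 1) ^ 2 + 4) :=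
      Real.lt_sqrt_of_sq_lt (by linarith)
    rw [hg]; linarith
  have hgeq : g * (k - 1 + g) = 1 := by
    have hs : Real.sqrt (((k : ℝ) - 1) ^ 2 + 4) = 2 * g + (k - 1) := by rw [hg]; ring
    rw [hs] at hsq
    linarith
  have hleast : IsLeast {ε₀ : ℝ | 0 ≤ ε₀ ∧ ∀ ε : ℝ, ε₀ ≤ ε → ExtendsAll k 4 ε} g := by
    refine ⟨⟨hg0.le, fun ε hε => extendsAll_of_le hk1' hk2' (hg0.trans_le hε) ?_⟩, ?_⟩
    · calc (1 : ℝ) = g * (k - 1 + g) := hgeq.symm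
        _ ≤ ε * (k - 1 + ε) := by
          apply mul_le_mul <;> linarith
    · rintro ε₀ ⟨h0, hext⟩
      by_contra hlt
      rw [not_le] at hlt
      -- rational total measure `s = k + ε` with `ε₀ < ε < g`
      obtain ⟨s, hs1, hs2⟩ := exists_rat_btwn (show (k : ℝ) + ε₀ < k + g by linarith)
      have hcast : ∀ s : ℚ, 0 ≤ s → (s : ℝ) = (s.num.toNat : ℝ) / s.den := by
        intro s hs
        have h1 : ((s.num.toNat : ℤ) : ℝ) = (s.num : ℝ) := by
          rw [Int.toNat_of_nonneg (Rat.num_nonneg.2 hs)]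
        rw [Rat.cast_def, ← h1, Int.cast_natCast]
      have hs0' : (2 : ℝ) ≤ s := by linarith
      have hs0 : (2 : ℚ) ≤ s := by exact_mod_cast hs0'
      have hkc := hcast k (by linarith)
      have hsc := hcast s (by linarith)
      have hden : ∀ s : ℚ, (0 : ℝ) < s.den := fun s => by exact_mod_cast s.den_pos
      have hpq : 2 * k.den ≤ k.num.toNat := by
        rw [hkc, le_div_iff₀ (hden k)] at hk1'
        exact_mod_cast hk1'
      have hab : 2 * s.den ≤ s.num.toNat := by
        rw [hsc, le_div_iff₀ (hden s)] at hs0'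
        exact_mod_cast hs0'
      have hE := hext ((s : ℝ) - k) (by linarith)
      rw [hkc, hsc] at hE
      have hfin := le_of_extendsAll k.den_pos s.den_pos hpq (by omega) hE
      rw [← hkc, ← hsc] at hfin
      have : ((s : ℝ) - k) * (s - 1) < g * (k - 1 + g) := by
        apply mul_lt_mul'' <;> linarith
      linarith
  exact hleast.csInf_eq
end

section
/- Let d be a positive integer with d ≡ 0 (mod 4), set d' = d/4, let k be a rational and ε a positive real such that 2 ≤ k < 2 + 1/(2d'−1) and ε·Σ_{j=0}^{d'−2} (k−1)^{2j+2} + ε·(k−1+ε)/(k+ε) ≥ 1/(k+ε). If G is a fractionally k-colorable graph and W is a subset of its vertex set whose vertices are at pairwise graph distance at least d, then any fractional (k+ε)-precoloring of W can be extended to a fractional (k+ε)-coloring of G. -/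
/-! Extending a fractional precoloring of a set of distant vertices.

Write `n = d / 4`, `m = k - 1` and `K = k + ε`. The bound on `k` excludes odd closed walks of length
less than `4 n + 1` (`no_short_odd_cycle`), and distinct vertices of `W` are at distance at least
`4 n`. So every vertex within distance `2 n - 1` of `W` has one center in `W`, and edges near `W`
join consecutive distance levels around a common center (`exists_levels`).

An independent set is chosen at random for each new color `x ∈ [0, K)`. Take `(t, u)` uniform in
`[0, K) × [0, 1)`. Far from `W` the vertices `v` with `t ∈ c v` are taken, where `c` is the given
fractional `k`-coloring; the values `t ≥ k` form a reserve of measure `ε` with no old color. Around a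
center `w` with `x ∈ P w` the choice is deformed so that `w` is taken: level `2 s` is taken as a
whole if `u < l s` and `t < k`, level `2 s + 1` as a whole if `t ≥ k` (`SelPos`). Around a center
with `x ∉ P w` the deformation runs the other way, favouring odd levels (`SelNeg`), with thresholds
`r = m / (m + ε) * l`. The thresholds decrease from `1` to `0` with the distance, which makes the
chosen sets independent, and around each center the two rules agree with the undeformed choice from
distance `2 n` on. As `x` ranges over `[0, K)`, measure `1` of the colors lies in `P w` and measure
`m + ε` outside; a vertex on a positive even level then gets exactly enough colors, and a vertex on
level `2 s + 1` gets enough if `l s ≤ ε (m + 1 + ε) + m² l (s + 1)`, or `1 ≤ ε (m + ε) + m² l 1` for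
`s = 0`. The largest thresholds allowed by these recursions satisfy the last inequality exactly
under the numerical hypothesis (`exists_thresholds`, `sel_mass`).

There are finitely many types of colors (the sets `{w ∈ W | x ∈ P w}`) and finitely many vertex sets,
so the random sets are realized by cutting each type class of `[0, K)` into pieces of the right
measures (`exists_realization`). Finally the color sets outside `W` are shrunk to measure one.
-/

open MeasureTheory

/-! ### Splitting sets of reals and realizing random sets -/

theorem exists_measurable_subset_eq {R : Set ℝ} (hR : MeasurableSet R)
    (hfin : volume R ≠ ⊤) {r : ENNReal} (hr : r ≤ volume R) :
    ∃ A ⊆ R, MeasurableSet A ∧ volume A = r := by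
  rcases eq_or_ne r 0 with rfl | hr0
  · exact ⟨∅, Set.empty_subset _, MeasurableSet.empty, measure_empty⟩
  rcases eq_or_lt_of_le hr with rfl | hlt
  · exact ⟨R, subset_rfl, hR, rfl⟩
  have hmono : Monotone (fun x : ℝ => volume (R ∩ Set.Iic x)) := fun x y hxy =>
    measure_mono (Set.inter_subset_inter_right _ (Set.Iic_subset_Iic.2 hxy))
  have hcont : Continuous (fun x : ℝ => volume (R ∩ Set.Iic x)) := by
    rw [continuous_iff_continuousAt]
    intro x
    -- the distribution function of a finite Lebesgue restriction is `1`-Lipschitz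
    have hlip : ∀ a b : ℝ, a ≤ b →
        volume (R ∩ Set.Iic b) ≤ volume (R ∩ Set.Iic a) + ENNReal.ofReal (b - a) := by
      intro a b hab
      calc volume (R ∩ Set.Iic b) ≤ volume ((R ∩ Set.Iic a) ∪ Set.Ioc a b) := by
            apply measure_mono
            rintro y ⟨hy, hyb⟩
            by_cases h : y ≤ a
            · exact Or.inl ⟨hy, h⟩
            · exact Or.inr ⟨not_le.1 h, hyb⟩
        _ ≤ _ := by
            refine (measure_union_le _ _).trans ?_
            rw [Real.volume_Ioc]
    have hx : volume (R ∩ Set.Iic x) ≠ ⊤ := measure_ne_top_of_subset Set.inter_subset_left hfin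
    rw [ContinuousAt, ENNReal.tendsto_nhds hx]
    intro e he
    have hev : ∀ᶠ y in nhds x, ENNReal.ofReal |y - x| ≤ e := by
      have : Filter.Tendsto (fun y : ℝ => ENNReal.ofReal |y - x|) (nhds x) (nhds 0) := by
        have h2 : Continuous (fun y : ℝ => ENNReal.ofReal |y - x|) :=
          ENNReal.continuous_ofReal.comp (by fun_prop)
        simpa using h2.tendsto x
      exact (this.eventually_lt_const he).mono fun _ h => h.le
    filter_upwards [hev] with y hy
    constructor
    · rcases le_total y x with h | h
      · rw [tsub_le_iff_right]
        refine (hlip y x h).trans ?_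
        gcongr
        rwa [abs_of_nonpos (by linarith), neg_sub] at hy
      · exact tsub_le_self.trans (hmono h)
    · rcases le_total y x with h | h
      · exact (hmono h).trans le_self_add
      · refine (hlip x y h).trans ?_
        gcongr
        rwa [abs_of_nonneg (by linarith)] at hy
  have hbot : Filter.Tendsto (fun x : ℝ => volume (R ∩ Set.Iic x)) Filter.atBot (nhds 0) := by
    have := tendsto_measure_iInter_atBot (μ := volume) (s := fun x : ℝ => R ∩ Set.Iic x)
      (fun x => (hR.inter measurableSet_Iic).nullMeasurableSet)
      (fun x y hxy => Set.inter_subset_inter_right _ (Set.Iic_subset_Iic.2 hxy))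
      ⟨0, measure_ne_top_of_subset Set.inter_subset_left hfin⟩
    rwa [← Set.inter_iInter, iInter_Iic_eq_empty_iff.2 (by simp),
      Set.inter_empty, measure_empty] at this
  have htop : Filter.Tendsto (fun x : ℝ => volume (R ∩ Set.Iic x)) Filter.atTop
      (nhds (volume R)) := by
    have := tendsto_measure_Iic_atTop (volume.restrict R)
    simpa [Measure.restrict_apply, Set.inter_comm] using this
  obtain ⟨a, ha⟩ := (hbot.eventually_lt_const (pos_iff_ne_zero.2 hr0)).exists
  obtain ⟨b, hb⟩ := (htop.eventually_const_lt hlt).exists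
  obtain ⟨x, hx⟩ := mem_range_of_exists_le_of_exists_ge hcont ⟨a, ha.le⟩ ⟨b, hb.le⟩
  exact ⟨R ∩ Set.Iic x, Set.inter_subset_left, hR.inter measurableSet_Iic, hx⟩

/-- A set `R` of finite measure can be cut into measurable pieces, labelled by a finite set `s`,
with prescribed measures summing to that of `R`. The cutting is encoded by a labelling `X` of all
of `ℝ`. -/
theorem exists_finite_split {F : Type*} [MeasurableSpace F] (s : Finset F) (hs : s.Nonempty)
    (ω : F → ENNReal) (R : Set ℝ) (hR : MeasurableSet R) (hfin : volume R ≠ ⊤)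
    (hsum : ∑ f ∈ s, ω f = volume R) :
    ∃ X : ℝ → F, Measurable X ∧ (∀ x, X x ∈ s) ∧ ∀ f ∈ s, volume (R ∩ X ⁻¹' {f}) = ω f := by
  classical
  induction hs using Finset.Nonempty.cons_induction generalizing R with
  | singleton a =>
    refine ⟨fun _ => a, measurable_const, by simp, ?_⟩
    intro f hf
    obtain rfl := Finset.mem_singleton.1 hf
    simpa [Set.preimage] using hsum.symm
  | cons a s ha hs ih =>
    rw [Finset.sum_cons] at hsum
    obtain ⟨A, hAR, hA, hAv⟩ := exists_measurable_subset_eq hR hfin (r := ω a)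
      (hsum ▸ le_self_add)
    have hAfin : volume A ≠ ⊤ := measure_ne_top_of_subset hAR hfin
    have hrest : ∑ f ∈ s, ω f = volume (R \ A) := by
      rw [measure_sdiff hAR hA.nullMeasurableSet hAfin, ← hsum, hAv,
        ENNReal.add_sub_cancel_left (hAv ▸ hAfin)]
    obtain ⟨X, hX, hXs, hXv⟩ := ih (R \ A) (hR.diff hA)
      (measure_ne_top_of_subset Set.sdiff_subset hfin) hrest
    refine ⟨fun x => if x ∈ A then a else X x, Measurable.ite hA measurable_const hX, ?_, ?_⟩
    · intro x
      dsimp only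
      split_ifs
      · simp
      · exact Finset.mem_cons_of_mem (hXs x)
    · intro f hf
      rcases Finset.mem_cons.1 hf with rfl | hf
      · rw [← hAv]
        congr 1
        ext x
        by_cases hx : x ∈ A
        · simp [hx, hAR hx]
        · have : X x ≠ f := fun h => ha (h ▸ hXs x)
          simp [hx, this]
      · rw [← hXv f hf]
        have hfa : a ≠ f := fun h => ha (h ▸ hf)
        congr 1
        ext x
        by_cases hx : x ∈ A
        · simp [hx, hfa]
        · simp [hx]

/-- Realization of random sets by sets of colors. A color `x ∈ R` has a type `τ x`, and for each
type `T` there is a random vertex set `{v | I T o v}` driven by a random point `o` of law `ν`.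
There are sets `C v ⊆ R` such that each color class `{v | x ∈ C v}`, `x ∈ R`, is one of the values
of the random set of type `τ x`, while the measure of `C v` is the integral over the colors of the
probability that `v` is selected. -/
theorem exists_realization {V : Type*} [Finite V] {Ω : Type*} [MeasurableSpace Ω]
    (ν : Measure Ω) [IsProbabilityMeasure ν] (R : Set ℝ) (hR : MeasurableSet R)
    (hfin : volume R ≠ ⊤) (τ : ℝ → V → Prop) (hτ : Measurable τ)
    (I : (V → Prop) → Ω → V → Prop) (hI : ∀ T v, MeasurableSet {o | I T o v}) :
    ∃ C : V → Set ℝ, (∀ v, MeasurableSet (C v)) ∧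
      (∀ v, volume (C v) = ∫⁻ x in R, ν {o | I (τ x) o v}) ∧
      ∀ x, ∃ o, ∀ v, x ∈ C v ↔ x ∈ R ∧ I (τ x) o v := by
  classical
  cases nonempty_fintype V
  have hΦ : ∀ T, Measurable (I T) := fun T =>
    measurable_pi_lambda _ fun v => measurableSet_setOfPred.1 (hI T v)
  have : Nonempty Ω := ν.nonempty_of_neZero
  -- on each type class split `R` according to the law of the random set `I T`
  have key : ∀ T : V → Prop, ∃ X : ℝ → V → Prop, Measurable X ∧
      (∀ x, ∃ o, X x = I T o) ∧
      ∀ f, volume ((R ∩ τ ⁻¹' {T}) ∩ X ⁻¹' {f}) = volume (R ∩ τ ⁻¹' {T}) * ν (I T ⁻¹' {f}) := by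
    intro T
    have hRT : MeasurableSet (R ∩ τ ⁻¹' {T}) := hR.inter (hτ (measurableSet_singleton T))
    have hsing : ∀ f, MeasurableSet (I T ⁻¹' {f}) := fun f => hΦ T (measurableSet_singleton f)
    have hs : (Finset.univ.filter fun f => f ∈ Set.range (I T)).Nonempty :=
      ⟨I T (Classical.arbitrary Ω), by simp⟩
    have hzero : ∀ f, f ∉ Set.range (I T) → I T ⁻¹' {f} = ∅ := by
      intro f hf
      ext o
      simp only [Set.mem_preimage, Set.mem_singleton_iff, Set.mem_empty_iff_false, iff_false]
      exact fun h => hf ⟨o, h⟩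
    have htot : ∑ f ∈ Finset.univ.filter (fun f => f ∈ Set.range (I T)), ν (I T ⁻¹' {f}) = 1 := by
      rw [sum_measure_preimage_singleton _ fun f _ => hsing f]
      convert measure_univ (μ := ν)
      ext o
      simp
    obtain ⟨X, hX, hXs, hXv⟩ := exists_finite_split _ hs
      (fun f => volume (R ∩ τ ⁻¹' {T}) * ν (I T ⁻¹' {f})) _ hRT
      (measure_ne_top_of_subset Set.inter_subset_left hfin)
      (by rw [← Finset.mul_sum, htot, mul_one])
    refine ⟨X, hX, fun x => ?_, fun f => ?_⟩
    · have := hXs x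
      simp only [Finset.mem_filter, Set.mem_range] at this
      obtain ⟨o, ho⟩ := this.2
      exact ⟨o, ho.symm⟩
    · by_cases hf : f ∈ Set.range (I T)
      · exact hXv f (by simpa using hf)
      · have hempty : X ⁻¹' {f} = ∅ := by
          ext x
          simp only [Set.mem_preimage, Set.mem_singleton_iff, Set.mem_empty_iff_false, iff_false]
          rintro rfl
          have := hXs x
          simp only [Finset.mem_filter] at this
          exact hf this.2
        rw [hzero f hf, hempty]
        simp
  choose X hX hXr hXv using key
  refine ⟨fun v => {x | x ∈ R ∧ X (τ x) x v}, fun v => ?_, fun v => ?_, fun x => ?_⟩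
  · have : {x | x ∈ R ∧ X (τ x) x v} = ⋃ T : V → Prop, (R ∩ τ ⁻¹' {T}) ∩ {x | X T x v} := by
      ext x
      simp
    change MeasurableSet {x | x ∈ R ∧ X (τ x) x v}
    rw [this]
    refine MeasurableSet.iUnion fun T => (hR.inter (hτ (measurableSet_singleton T))).inter ?_
    exact measurableSet_setOfPred.2 (measurable_pi_iff.1 (hX T) v)
  · have hset : {x | x ∈ R ∧ X (τ x) x v} =
        ⋃ p ∈ (Finset.univ : Finset ((V → Prop) × (V → Prop))).filter (fun p => p.2 v),
          (R ∩ τ ⁻¹' {p.1}) ∩ X p.1 ⁻¹' {p.2} := by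
      ext x
      simp
    have hmeas : ∀ T f, MeasurableSet ((R ∩ τ ⁻¹' {T}) ∩ X T ⁻¹' {f}) := fun T f =>
      (hR.inter (hτ (measurableSet_singleton T))).inter (hX T (measurableSet_singleton f))
    change volume {x | x ∈ R ∧ X (τ x) x v} = _
    rw [hset, measure_biUnion_finset _ fun p _ => hmeas p.1 p.2]
    · simp_rw [hXv]
      have hint : ∫⁻ x in R, ν {o | I (τ x) o v} =
          ∑ T : V → Prop, ν {o | I T o v} * volume (R ∩ τ ⁻¹' {T}) := by
        have h1 := lintegral_map (μ := volume.restrict R)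
          (f := fun T : V → Prop => ν {o | I T o v}) (measurable_of_finite _) hτ
        rw [← h1, lintegral_fintype]
        refine Finset.sum_congr rfl fun T _ => ?_
        rw [Measure.map_apply hτ (measurableSet_singleton T),
          Measure.restrict_apply (hτ (measurableSet_singleton T)), Set.inter_comm]
      rw [hint, Finset.sum_filter, Fintype.sum_prod_type]
      refine Finset.sum_congr rfl fun T _ => ?_
      have h2 : {o | I T o v} = I T ⁻¹' ((Finset.univ.filter fun f : V → Prop => f v) : Set _) := by
        ext o
        simp
      rw [h2, ← sum_measure_preimage_singleton _ fun f _ => hΦ T (measurableSet_singleton f),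
        Finset.sum_filter, mul_comm, Finset.mul_sum]
      refine Finset.sum_congr rfl fun f _ => ?_
      split_ifs <;> simp
    · rintro ⟨T, f⟩ - ⟨T', f'⟩ - hne
      rw [Function.onFun, Set.disjoint_left]
      rintro x ⟨⟨-, h1⟩, h2⟩ ⟨⟨-, h3⟩, h4⟩
      simp only [Set.mem_preimage, Set.mem_singleton_iff] at h1 h2 h3 h4
      subst h1
      subst h3
      exact hne (Prod.ext rfl (h2.symm.trans h4))
  · obtain ⟨o, ho⟩ := hXr (τ x) x
    exact ⟨o, fun v => by simp [ho]⟩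

/-! ### Odd girth and distance levels -/

/-- Along a walk of even length the color sets drift apart by at most `k - 2` every two steps:
two neighbours of a vertex choose their unit sets from the same set of measure `k - 1`. For a walk
of length `2 * j + 1` the overlap of the end sets is bounded by the drift over its last `2 * j`
steps. -/
theorem drift_along_walk {V : Type*} {G : SimpleGraph V} {k : ℝ} {c : V → Set ℝ}
    (hc : IsFracColoring G k c) (hk : 2 ≤ k) {u v : V} (p : G.Walk u v) :
    (∀ j, p.length = 2 * j → volume.real (c u \ c v) ≤ j * (k - 2)) ∧
      (∀ j, p.length = 2 * j + 1 → volume.real (c u ∩ c v) ≤ j * (k - 2)) := by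
  obtain ⟨hsub, hmeas, hvol, hdisj⟩ := hc
  have hone : ∀ x, volume.real (c x) = 1 := fun x => by simp [Measure.real, hvol]
  have hfin : ∀ x, volume (c x) ≠ ⊤ := fun x => by simp [hvol]
  induction p with
  | nil =>
    refine ⟨fun j hj => ?_, fun j hj => ?_⟩
    · have : (0 : ℝ) ≤ j * (k - 2) := mul_nonneg (Nat.cast_nonneg j) (by linarith)
      simpa using this
    · simp only [SimpleGraph.Walk.length_nil] at hj
      omega
  | @cons a b d hab p ih =>
    rw [SimpleGraph.Walk.length_cons]
    have hab' := Set.disjoint_left.1 (hdisj _ _ hab)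
    have hsplit := measureReal_inter_add_sdiff (μ := volume) (s := c d) (hmeas b) (hfin d)
    have hsplit' := measureReal_inter_add_sdiff (μ := volume) (s := c b) (hmeas d) (hfin b)
    rw [hone, Set.inter_comm] at hsplit
    rw [hone] at hsplit'
    refine ⟨fun j hj => ?_, fun j hj => ?_⟩
    · obtain ⟨i, rfl⟩ : ∃ i, j = i + 1 := ⟨j - 1, by omega⟩
      have h1 := ih.2 i (by omega)
      have hle : volume.real ((c a \ c d) ∪ (c b ∪ (c d \ c b))) ≤ volume.real (Set.Ico 0 k) := by
        refine measureReal_mono ?_ (by simp)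
        rintro x (⟨h, -⟩ | h | ⟨h, -⟩)
        exacts [hsub _ h, hsub _ h, hsub _ h]
      have hfb : volume (c d \ c b) ≠ ⊤ := measure_ne_top_of_subset Set.sdiff_subset (hfin d)
      have hd1 : Disjoint (c a \ c d) (c b ∪ (c d \ c b)) := by
        rw [Set.disjoint_left]
        rintro x ⟨h1, h2⟩ (h3 | ⟨h3, -⟩)
        exacts [hab' h1 h3, h2 h3]
      rw [measureReal_union hd1 ((hmeas b).union ((hmeas d).diff (hmeas b)))
          (measure_ne_top_of_subset Set.sdiff_subset (hfin a))
          (measure_union_ne_top (hfin b) hfb),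
        measureReal_union Set.disjoint_sdiff_right ((hmeas d).diff (hmeas b)) (hfin b) hfb,
        hone, Real.volume_real_Ico, sub_zero, max_eq_left (by linarith)] at hle
      push_cast
      linarith
    · have h1 := ih.1 j (by omega)
      have hle : volume.real (c a ∩ c d) ≤ volume.real (c d \ c b) :=
        measureReal_mono (fun x hx => ⟨hx.2, hab' hx.1⟩)
          (measure_ne_top_of_subset Set.sdiff_subset (hfin d))
      linarith

/-- The ends of an edge have disjoint color sets, so the drift along an even walk between them is
`1`, which takes at least `2 * n` double steps. Hence an odd closed walk has length at least
`4 * n + 1`. -/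
theorem no_short_odd_cycle {V : Type*} {G : SimpleGraph V} {k : ℝ} {c : V → Set ℝ}
    (hc : IsFracColoring G k c) (hk : 2 ≤ k) {n : ℕ} (hn : 0 < n)
    (hk3 : k < 2 + 1 / (2 * (n : ℝ) - 1)) {u v : V} (huv : G.Adj u v) (p : G.Walk u v)
    {i : ℕ} (hp : p.length = 2 * i) : 2 * n ≤ i := by
  by_contra! hi
  have h1 := (drift_along_walk hc hk p).1 i hp
  obtain ⟨-, -, hvol, hdisj⟩ := hc
  rw [(hdisj _ _ huv).sdiff_eq_left, Measure.real, hvol, ENNReal.toReal_one] at h1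
  have hn' : (1 : ℝ) ≤ n := by exact_mod_cast hn
  have hi' : (i : ℝ) + 1 ≤ 2 * n := by exact_mod_cast hi
  have hk4 : (k - 2) * (2 * n - 1) < 1 := by
    rw [← lt_div_iff₀ (by linarith)]
    linarith
  nlinarith [mul_le_mul_of_nonneg_right (show (i : ℝ) ≤ 2 * n - 1 by linarith)
    (show 0 ≤ k - 2 by linarith)]

/-- Each vertex at distance less than `2 * n` from `W` has a unique center `ctr v ∈ W` at that
distance `lev v`; all other vertices are given the level `2 * n` (and an irrelevant center). Without
short odd closed walks, an edge joins consecutive levels around the same center, except that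
both ends may have level `2 * n`; an edge from level `2 * n - 1` to level `2 * n` carries no
information about the center of the outer end. -/
theorem exists_levels {V : Type*} {G : SimpleGraph V} {W : Set V} {n : ℕ} (hn : 0 < n)
    (hW : DistAtLeast G (4 * n) W)
    (hodd : ∀ u v, G.Adj u v → ∀ p : G.Walk u v, ∀ i, p.length = 2 * i → 2 * n ≤ i) :
    ∃ (ctr : V → V) (lev : V → ℕ), (∀ w ∈ W, ctr w = w ∧ lev w = 0) ∧
      (∀ v, lev v < 2 * n → ctr v ∈ W) ∧ (∀ v, lev v = 0 → v ∈ W) ∧ (∀ v, lev v ≤ 2 * n) ∧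
      ∀ u v, G.Adj u v → (lev u = 2 * n ∧ lev v = 2 * n) ∨
        (lev u + 1 = lev v ∧ (lev v < 2 * n → ctr u = ctr v)) ∨
        (lev v + 1 = lev u ∧ (lev u < 2 * n → ctr u = ctr v)) := by
  classical
  let near : V → Prop := fun v => ∃ w ∈ W, ∃ p : G.Walk w v, p.length < 2 * n
  let ctr : V → V := fun v => if h : near v then h.choose else v
  let lev : V → ℕ := fun v => if near v then G.dist (ctr v) v else 2 * n
  have hctr : ∀ v, near v → ctr v ∈ W ∧ ∃ p : G.Walk (ctr v) v, p.length = lev v ∧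
      lev v < 2 * n := by
    intro v hv
    have hcv : ctr v = hv.choose := dif_pos hv
    have hlv : lev v = G.dist (ctr v) v := if_pos hv
    obtain ⟨hw, p, hp⟩ := hv.choose_spec
    rw [← hcv] at hw
    refine ⟨hw, ?_⟩
    have hr : G.Reachable (ctr v) v := by
      rw [hcv]
      exact ⟨p⟩
    obtain ⟨q, hq⟩ := hr.exists_walk_length_eq_dist
    refine ⟨q, hq.trans hlv.symm, ?_⟩
    rw [hlv, hcv]
    exact lt_of_le_of_lt (SimpleGraph.dist_le p) hp
  have hmin : ∀ v (_ : near v) (p : G.Walk (ctr v) v), lev v ≤ p.length := by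
    intro v hv p
    have hlv : lev v = G.dist (ctr v) v := if_pos hv
    exact hlv ▸ SimpleGraph.dist_le p
  have hfar : ∀ v, ¬ near v → lev v = 2 * n := fun v hv => if_neg hv
  have huniq : ∀ w ∈ W, ∀ w' ∈ W, ∀ p : G.Walk w w', p.length < 4 * n → w = w' := by
    intro w hw w' hw' p hp
    by_contra hne
    exact absurd (hW w hw w' hw' hne p) (by omega)
  have hWnear : ∀ w ∈ W, near w := fun w hw => ⟨w, hw, .nil, by simpa using hn⟩
  have hlt : ∀ v, lev v < 2 * n → near v := by
    intro v hv
    by_contra h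
    have := hfar v h
    omega
  have hstep : ∀ u v, G.Adj u v → near u → lev u + 1 < 2 * n → near v := by
    intro u v huv hu hlu
    obtain ⟨hw, p, hp, -⟩ := hctr u hu
    exact ⟨ctr u, hw, p.concat huv, by rw [SimpleGraph.Walk.length_concat]; omega⟩
  refine ⟨ctr, lev, ?_, fun v hv => (hctr v (hlt v hv)).1, ?_, ?_, ?_⟩
  · intro w hw
    obtain ⟨hcw, p, hp, hl⟩ := hctr w (hWnear w hw)
    have heq : ctr w = w := huniq _ hcw _ hw p (by omega)
    refine ⟨heq, Nat.le_zero.1 ?_⟩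
    exact hmin w (hWnear w hw) ((SimpleGraph.Walk.nil : G.Walk w w).copy heq.symm rfl)
      |>.trans (by simp)
  · intro v hv
    obtain ⟨hcv, p, hp, -⟩ := hctr v (hlt v (by omega))
    rw [← SimpleGraph.Walk.eq_of_length_eq_zero (p := p) (by omega)]
    exact hcv
  · intro v
    by_cases hv : near v
    · obtain ⟨-, -, -, h⟩ := hctr v hv
      exact h.le
    · exact (hfar v hv).le
  · intro u v huv
    by_cases hu : near u <;> by_cases hv : near v
    · obtain ⟨hcu, p, hp, hlu⟩ := hctr u hu
      obtain ⟨hcv, q, hq, hlv⟩ := hctr v hv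
      have heq : ctr u = ctr v := by
        refine huniq _ hcu _ hcv ((p.concat huv).append q.reverse) ?_
        rw [SimpleGraph.Walk.length_append, SimpleGraph.Walk.length_concat,
          SimpleGraph.Walk.length_reverse]
        omega
      have h1 := hmin v hv ((p.concat huv).copy heq rfl)
      have h2 := hmin u hu ((q.concat huv.symm).copy heq.symm rfl)
      rw [SimpleGraph.Walk.length_copy, SimpleGraph.Walk.length_concat] at h1 h2
      -- equal levels would close up to an odd walk of length `2 * lev u + 1 < 4 * n + 1`
      have h3 : lev u ≠ lev v := by
        intro h
        have := hodd u v huv (p.reverse.append (q.copy heq.symm rfl)) (lev u) (by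
          rw [SimpleGraph.Walk.length_append, SimpleGraph.Walk.length_copy,
            SimpleGraph.Walk.length_reverse]
          omega)
        omega
      rcases lt_or_gt_of_ne h3 with h | h
      · exact Or.inr (Or.inl ⟨by omega, fun _ => heq⟩)
      · exact Or.inr (Or.inr ⟨by omega, fun _ => heq⟩)
    · obtain ⟨-, -, -, hlu⟩ := hctr u hu
      have h1 := hfar v hv
      have h2 : ¬ lev u + 1 < 2 * n := fun h => hv (hstep u v huv hu h)
      exact Or.inr (Or.inl ⟨by omega, fun h => by omega⟩)
    · obtain ⟨-, -, -, hlv⟩ := hctr v hv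
      have h1 := hfar u hu
      have h2 : ¬ lev v + 1 < 2 * n := fun h => hu (hstep v u huv.symm hv h)
      exact Or.inr (Or.inr ⟨by omega, fun h => by omega⟩)
    · exact Or.inl ⟨hfar u hu, hfar v hv⟩

/-! ### Thresholds -/

/-- The thresholds are the truncated solution of `l s = ε (m + 1 + ε) + m² l (s + 1)`, `l n = 0`,
that is `l s = min 1 (ε (m + 1 + ε) ∑_{j < n - s} m ^ (2 j))`, except that `l 0 = 1`. The last two
conditions say that the vertices on level `1`, respectively `2 s + 1`, receive enough colors. The
one for level `1` is the numerical hypothesis of the theorem. -/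
theorem exists_thresholds {m ε : ℝ} (hm : 1 ≤ m) (hε : 0 < ε) {n : ℕ} (hn : 0 < n)
    (h : 1 ≤ (m + ε) * ε + ε * (m + 1 + ε) * ∑ j ∈ Finset.range (n - 1), m ^ (2 * j + 2)) :
    ∃ l : ℕ → ℝ, Antitone l ∧ l 0 = 1 ∧ (∀ s, 0 ≤ l s) ∧ (∀ s, n ≤ s → l s = 0) ∧
      1 ≤ (m + ε) * ε + m ^ 2 * l 1 ∧
      ∀ s, 1 ≤ s → s < n → l s ≤ ε + (m + ε) * ε + m ^ 2 * l (s + 1) := by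
  set S : ℕ → ℝ := fun N => ε * (m + 1 + ε) * ∑ j ∈ Finset.range N, m ^ (2 * j) with hS
  have hβ : 0 < ε * (m + 1 + ε) := by positivity
  have hm2 : 1 ≤ m ^ 2 := one_le_pow₀ hm
  have hS0 : ∀ N, 0 ≤ S N := fun N => by positivity
  have hSmono : Monotone S := by
    refine monotone_nat_of_le_succ fun N => ?_
    simp only [hS, Finset.sum_range_succ]
    have : 0 ≤ m ^ (2 * N) := by positivity
    nlinarith
  have hSsucc : ∀ N, S (N + 1) = ε * (m + 1 + ε) + m ^ 2 * S N := by
    intro N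
    simp only [hS, Finset.sum_range_succ', mul_add, Finset.mul_sum, pow_zero, mul_zero, mul_one]
    rw [add_comm]
    congr 1
    refine Finset.sum_congr rfl fun j _ => ?_
    ring
  have hSshift : ∀ N, m ^ 2 * S N =
      ε * (m + 1 + ε) * ∑ j ∈ Finset.range N, m ^ (2 * j + 2) := by
    intro N
    simp only [hS, Finset.mul_sum]
    refine Finset.sum_congr rfl fun j _ => ?_
    ring
  refine ⟨fun s => if s = 0 then 1 else min 1 (S (n - s)), ?_, by simp, ?_, ?_, ?_, ?_⟩
  · refine antitone_nat_of_succ_le fun s => ?_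
    rcases Nat.eq_zero_or_pos s with rfl | hs
    · simp
    · simp only [Nat.succ_ne_zero, hs.ne', if_false]
      exact min_le_min le_rfl (hSmono (by omega))
  · intro s
    dsimp only
    split_ifs
    · exact zero_le_one
    · exact le_min zero_le_one (hS0 _)
  · intro s hs
    have : n - s = 0 := by omega
    simp [show s ≠ 0 by omega, this, hS]
  · simp only [one_ne_zero, if_false]
    rcases min_choice (1 : ℝ) (S (n - 1)) with h1 | h1
    · rw [h1]
      have : 0 < (m + ε) * ε := by positivity
      linarith
    · rw [h1, hSshift]
      exact h
  · intro s hs hsn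
    have hns : n - s = (n - (s + 1)) + 1 := by omega
    simp only [show s ≠ 0 by omega, Nat.succ_ne_zero, if_false]
    rcases min_choice (1 : ℝ) (S (n - (s + 1))) with h1 | h1
    · rw [h1]
      have : 0 < (m + ε) * ε := by positivity
      exact (min_le_left _ _).trans (by linarith)
    · rw [h1]
      refine (min_le_right _ _).trans ?_
      rw [hns, hSsucc]
      linarith

/-! ### The selection rules -/

/-- Selection of a vertex at level `i` whose center has the current color. The random point
`o = (t, u)` consists of an old color `t` (extra if `t ≥ k`) and a threshold variable `u`; `A` is
the old color set of the vertex. The center is always selected and level `1` never. The even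
level `2 s` is selected if `t ∈ A`, and as a whole if `t` is not extra and `u < l s`. The odd level
`2 s + 1` is selected as a whole if `t` is extra, and otherwise if `t ∈ A` and `u ≥ l s`
(for `u ≥ 0`). -/
def SelPos (k : ℝ) (l : ℕ → ℝ) (A : Set ℝ) (i : ℕ) (o : ℝ × ℝ) : Prop :=
  i = 0 ∨ (Even i ∧ (o.1 ∈ A ∨ (o.1 < k ∧ o.2 ∈ Set.Ico 0 (l (i / 2))))) ∨
    (Odd i ∧ i ≠ 1 ∧ (k ≤ o.1 ∨ (o.1 ∈ A ∧ o.2 ∉ Set.Ico 0 (l (i / 2)))))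

/-- Selection of a vertex at level `i` whose center does not have the current color, with the
conventions of `SelPos`. The roles of the parities are exchanged: the odd level `2 s + 1` is
selected if `t ∈ A`, and as a whole if `t` is extra or `u < r (s + 1)`; the even level `2 s > 0` is
selected if `t ∈ A` and `u ≥ r s`; the center is never selected. -/
def SelNeg (k : ℝ) (r : ℕ → ℝ) (A : Set ℝ) (i : ℕ) (o : ℝ × ℝ) : Prop :=
  (Even i ∧ i ≠ 0 ∧ o.1 ∈ A ∧ o.2 ∉ Set.Ico 0 (r (i / 2))) ∨
    (Odd i ∧ (k ≤ o.1 ∨ o.1 ∈ A ∨ o.2 ∈ Set.Ico 0 (r ((i + 1) / 2))))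

theorem measurableSet_selPos (k : ℝ) (l : ℕ → ℝ) {A : Set ℝ} (hA : MeasurableSet A) (i : ℕ) :
    MeasurableSet {o | SelPos k l A i o} := by
  have hA' : MeasurableSet {o : ℝ × ℝ | o.1 ∈ A} := measurable_fst hA
  have h2 : MeasurableSet {o : ℝ × ℝ | o.2 ∈ Set.Ico 0 (l (i / 2))} :=
    measurable_snd measurableSet_Ico
  have h3 : MeasurableSet {o : ℝ × ℝ | o.1 < k} := measurable_fst measurableSet_Iio
  have h4 : MeasurableSet {o : ℝ × ℝ | k ≤ o.1} := measurable_fst measurableSet_Ici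
  exact (MeasurableSet.const _).union (((MeasurableSet.const _).inter (hA'.union (h3.inter h2))).union
    ((MeasurableSet.const _).inter ((MeasurableSet.const _).inter (h4.union (hA'.inter h2.compl)))))

theorem measurableSet_selNeg (k : ℝ) (r : ℕ → ℝ) {A : Set ℝ} (hA : MeasurableSet A) (i : ℕ) :
    MeasurableSet {o | SelNeg k r A i o} := by
  have hA' : MeasurableSet {o : ℝ × ℝ | o.1 ∈ A} := measurable_fst hA
  have h2 : ∀ s, MeasurableSet {o : ℝ × ℝ | o.2 ∈ Set.Ico 0 (r s)} := fun s =>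
    measurable_snd measurableSet_Ico
  have h4 : MeasurableSet {o : ℝ × ℝ | k ≤ o.1} := measurable_fst measurableSet_Ici
  exact ((MeasurableSet.const _).inter ((MeasurableSet.const _).inter
    (hA'.inter (h2 _).compl))).union
      ((MeasurableSet.const _).inter (h4.union (hA'.union (h2 _))))

theorem selPos_far {k : ℝ} {l : ℕ → ℝ} {n : ℕ} (hn : 0 < n) (hl : l n = 0) (A : Set ℝ)
    (o : ℝ × ℝ) : SelPos k l A (2 * n) o ↔ o.1 ∈ A := by
  have h1 : ¬ Odd (2 * n) := by simp
  have h2 : 2 * n / 2 = n := by omega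
  simp [SelPos, hn.ne', h2, hl]

theorem selNeg_far {k : ℝ} {r : ℕ → ℝ} {n : ℕ} (hn : 0 < n) (hr : r n = 0) (A : Set ℝ)
    (o : ℝ × ℝ) : SelNeg k r A (2 * n) o ↔ o.1 ∈ A := by
  have h2 : 2 * n / 2 = n := by omega
  simp [SelNeg, hn.ne', h2, hr]

/-- Adjacent vertices on consecutive levels are not both selected: a level taken as a whole removes
its neighbouring levels, because the thresholds decrease. -/
theorem selPos_disjoint {k : ℝ} {l : ℕ → ℝ} (hl : Antitone l) {A B : Set ℝ}
    (hA : A ⊆ Set.Ico 0 k) (hB : B ⊆ Set.Ico 0 k) (hAB : Disjoint A B) (i : ℕ) (o : ℝ × ℝ)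
    (h1 : SelPos k l A i o) (h2 : SelPos k l B (i + 1) o) : False := by
  have hd : o.1 ∈ A → o.1 ∉ B := fun h => Set.disjoint_left.1 hAB h
  rcases Nat.even_or_odd' i with ⟨s, rfl | rfl⟩
  · have e1 : 2 * s / 2 = s := by omega
    have e2 : (2 * s + 1) / 2 = s := by omega
    rcases h2 with h2 | ⟨h2, -⟩ | ⟨-, hs, h2⟩
    · omega
    · exact absurd h2 (by simp)
    · rcases h1 with h1 | ⟨-, h1⟩ | ⟨h1, -⟩
      · omega
      · rw [e1] at h1
        rw [e2] at h2
        rcases h2 with h2 | ⟨h2, h2'⟩ <;> rcases h1 with h1 | ⟨h1, h1'⟩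
        · exact absurd (hA h1).2 (not_lt.2 h2)
        · exact absurd h1 (not_lt.2 h2)
        · exact hd h1 h2
        · exact h2' h1'
      · exact absurd h1 (by simp)
  · have e1 : (2 * s + 1) / 2 = s := by omega
    have e2 : (2 * s + 1 + 1) / 2 = s + 1 := by omega
    rcases h1 with h1 | ⟨h1, -⟩ | ⟨-, -, h1⟩
    · omega
    · exact absurd h1 (by simp)
    · rcases h2 with h2 | ⟨-, h2⟩ | ⟨h2, -⟩
      · omega
      · rw [e1] at h1
        rw [e2] at h2
        rcases h1 with h1 | ⟨h1, h1'⟩ <;> rcases h2 with h2 | ⟨h2, h2'⟩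
        · exact absurd (hB h2).2 (not_lt.2 h1)
        · exact absurd h2 (not_lt.2 h1)
        · exact hd h1 h2
        · exact h1' ⟨h2'.1, h2'.2.trans_le (hl s.le_succ)⟩
      · exact absurd h2 (by simp [parity_simps])

theorem selNeg_disjoint {k : ℝ} {r : ℕ → ℝ} (hr : Antitone r) {A B : Set ℝ}
    (hA : A ⊆ Set.Ico 0 k) (hB : B ⊆ Set.Ico 0 k) (hAB : Disjoint A B) (i : ℕ) (o : ℝ × ℝ)
    (h1 : SelNeg k r A i o) (h2 : SelNeg k r B (i + 1) o) : False := by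
  have hd : o.1 ∈ A → o.1 ∉ B := fun h => Set.disjoint_left.1 hAB h
  rcases Nat.even_or_odd' i with ⟨s, rfl | rfl⟩
  · have e1 : 2 * s / 2 = s := by omega
    have e2 : (2 * s + 1 + 1) / 2 = s + 1 := by omega
    rcases h1 with ⟨-, -, h1, h1'⟩ | ⟨h1, -⟩
    · rcases h2 with ⟨h2, -⟩ | ⟨-, h2⟩
      · exact absurd h2 (by simp)
      · rw [e1] at h1'
        rw [e2] at h2
        rcases h2 with h2 | h2 | h2
        · exact absurd (hA h1).2 (not_lt.2 h2)
        · exact hd h1 h2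
        · exact h1' ⟨h2.1, h2.2.trans_le (hr s.le_succ)⟩
    · exact absurd h1 (by simp)
  · have e2 : (2 * s + 1 + 1) / 2 = s + 1 := by omega
    rcases h1 with ⟨h1, -⟩ | ⟨-, h1⟩
    · exact absurd h1 (by simp)
    · rcases h2 with ⟨-, -, h2, h2'⟩ | ⟨h2, -⟩
      · rw [e2] at h1 h2'
        rcases h1 with h1 | h1 | h1
        · exact absurd (hB h2).2 (not_lt.2 h1)
        · exact hd h1 h2
        · exact h2' h1
      · exact absurd h2 (by simp [parity_simps])

/-! ### Selection probabilities -/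

/-- The uniform probability measure on `[0, K) × [0, 1)` (for `K > 0`), the law of the random
point `(t, u)`. -/
noncomputable def boxMeasure (K : ℝ) : Measure (ℝ × ℝ) :=
  (ENNReal.ofReal K)⁻¹ • volume.restrict (Set.Ico 0 K ×ˢ Set.Ico 0 1)

theorem isProbabilityMeasure_boxMeasure {K : ℝ} (hK : 0 < K) :
    IsProbabilityMeasure (boxMeasure K) := by
  constructor
  have : volume (Set.Ico 0 K ×ˢ Set.Ico (0 : ℝ) 1) = ENNReal.ofReal K := by
    rw [Measure.volume_eq_prod, Measure.prod_prod]
    simp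
  simp only [boxMeasure, Measure.smul_apply, Measure.restrict_apply_univ, this, smul_eq_mul]
  exact ENNReal.inv_mul_cancel (by simpa using hK) ENNReal.ofReal_ne_top

/-- Each selection event contains three disjoint boxes: all non-extra `t` with `u < a`, the
`t` in the color set with `u ≥ b`, and the extra `t` with `u < z`. -/
theorem le_boxMeasure {k K : ℝ} (hk : 0 < k) (hkK : k ≤ K) {A : Set ℝ}
    (hA : MeasurableSet A) (hAk : A ⊆ Set.Ico 0 k) (hA1 : volume A = 1) {a b z : ℝ}
    (ha : 0 ≤ a) (hab : a ≤ b) (hb : b ≤ 1) (hz : 0 ≤ z) (hz1 : z ≤ 1) {S : Set (ℝ × ℝ)}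
    (h1 : Set.Ico 0 k ×ˢ Set.Ico 0 a ⊆ S) (h2 : A ×ˢ Set.Ico b 1 ⊆ S)
    (h3 : Set.Ico k K ×ˢ Set.Ico 0 z ⊆ S) :
    ENNReal.ofReal ((k * a + (1 - b) + (K - k) * z) / K) ≤ boxMeasure K S := by
  have hK : 0 < K := hk.trans_le hkK
  have hvol : volume ((Set.Ico 0 k ×ˢ Set.Ico 0 a ∪ A ×ˢ Set.Ico b 1) ∪
      Set.Ico k K ×ˢ Set.Ico 0 z) = ENNReal.ofReal (k * a + (1 - b) + (K - k) * z) := by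
    rw [measure_union, measure_union, Measure.volume_eq_prod, Measure.prod_prod,
      Measure.prod_prod, Measure.prod_prod, hA1]
    · simp only [Real.volume_Ico, sub_zero, one_mul]
      rw [← ENNReal.ofReal_mul hk.le, ← ENNReal.ofReal_mul (by linarith),
        ← ENNReal.ofReal_add (by positivity) (by linarith),
        ← ENNReal.ofReal_add (add_nonneg (by positivity) (by linarith))
          (mul_nonneg (by linarith) hz)]
    · rw [Set.disjoint_left]
      rintro ⟨t, u⟩ ⟨-, h⟩ ⟨-, h'⟩
      exact absurd h.2 (not_lt.2 (hab.trans h'.1))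
    · exact hA.prod measurableSet_Ico
    · rw [Set.disjoint_left]
      rintro ⟨t, u⟩ (⟨h, -⟩ | ⟨h, -⟩) ⟨h', -⟩
      · exact absurd h.2 (not_lt.2 h'.1)
      · exact absurd (hAk h).2 (not_lt.2 h'.1)
    · exact measurableSet_Ico.prod measurableSet_Ico
  have hsub : (Set.Ico 0 k ×ˢ Set.Ico 0 a ∪ A ×ˢ Set.Ico b 1) ∪ Set.Ico k K ×ˢ Set.Ico 0 z ⊆
      S ∩ Set.Ico 0 K ×ˢ Set.Ico 0 1 := by
    refine Set.subset_inter (Set.union_subset (Set.union_subset h1 h2) h3) ?_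
    rintro ⟨t, u⟩ ((⟨h, h'⟩ | ⟨h, h'⟩) | ⟨h, h'⟩) <;>
      simp only [Set.mem_Ico] at h h'
    · exact ⟨⟨h.1, by dsimp; linarith⟩, ⟨h'.1, by dsimp; linarith⟩⟩
    · have := hAk h
      exact ⟨⟨this.1, this.2.trans_le hkK⟩, ⟨by dsimp; linarith, h'.2⟩⟩
    · exact ⟨⟨by dsimp; linarith, h.2⟩, ⟨h'.1, by dsimp; linarith⟩⟩
  rw [div_eq_inv_mul, ENNReal.ofReal_mul (by positivity), ENNReal.ofReal_inv_of_pos hK, ← hvol]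
  simp only [boxMeasure, Measure.smul_apply, smul_eq_mul]
  exact mul_le_mul_right ((measure_mono hsub).trans (Measure.le_restrict_apply _ _)) _

/-- Conversion of a count of colors to measures: a vertex selected with probability
`x / (m + 1 + ε)` for the unit of colors of its center and `y / (m + 1 + ε)` for the remaining
colors, of measure `m + ε`, receives colors of total measure at least one. -/
theorem weighted_count {m ε : ℝ} (hm : 1 ≤ m) (hε : 0 < ε) {x y : ℝ}
    (h : m + 1 + ε ≤ x + (m + ε) * y) (hx : 0 ≤ x) (hy : 0 ≤ y) :
    1 ≤ ENNReal.ofReal (x / (m + 1 + ε)) * 1 +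
      ENNReal.ofReal (y / (m + 1 + ε)) * ENNReal.ofReal (m + ε) := by
  have hK : 0 < m + 1 + ε := by linarith
  rw [mul_one, ← ENNReal.ofReal_mul (by positivity),
    ← ENNReal.ofReal_add (by positivity) (by positivity), ENNReal.one_le_ofReal]
  have e : x / (m + 1 + ε) + y / (m + 1 + ε) * (m + ε) = (x + (m + ε) * y) / (m + 1 + ε) := by
    ring
  rw [e, le_div_iff₀ hK]
  linarith

/-- A vertex on a level strictly between `0` and `2 * n` receives colors of total measure at least
one. On even levels the choice `(m + ε) r = m l` makes the count exact; on odd levels it is the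
inequality required of the thresholds. -/
theorem sel_mass {m ε : ℝ} (hm : 1 ≤ m) (hε : 0 < ε) {n : ℕ} {l r : ℕ → ℝ}
    (hl : Antitone l) (hl0 : l 0 = 1) (hlnn : ∀ s, 0 ≤ l s)
    (hl1 : 1 ≤ (m + ε) * ε + m ^ 2 * l 1)
    (hls : ∀ s, 1 ≤ s → s < n → l s ≤ ε + (m + ε) * ε + m ^ 2 * l (s + 1))
    (hr : ∀ s, (m + ε) * r s = m * l s) {A : Set ℝ} (hA : MeasurableSet A)
    (hAk : A ⊆ Set.Ico 0 (m + 1)) (hA1 : volume A = 1) {i : ℕ} (hi0 : i ≠ 0) (hi : i < 2 * n) :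
    1 ≤ boxMeasure (m + 1 + ε) {o | SelPos (m + 1) l A i o} * 1 +
      boxMeasure (m + 1 + ε) {o | SelNeg (m + 1) r A i o} * ENNReal.ofReal (m + ε) := by
  have hle1 : ∀ s, l s ≤ 1 := fun s => hl0 ▸ hl (Nat.zero_le s)
  have hrnn : ∀ s, 0 ≤ r s := by
    intro s
    by_contra! h
    nlinarith [hr s, hlnn s, mul_nonneg (zero_le_one.trans hm) (hlnn s),
      mul_pos_of_neg_of_neg h (show -(m + ε) < 0 by linarith)]
  have hrle : ∀ s, r s ≤ 1 := by
    intro s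
    by_contra! h
    nlinarith [hr s, hle1 s, mul_le_mul_of_nonneg_left (hle1 s) (zero_le_one.trans hm),
      mul_lt_mul_of_pos_left h (show 0 < m + ε by linarith)]
  have hbox := fun {a b z : ℝ} (ha : 0 ≤ a) (hab : a ≤ b) (hb : b ≤ 1) (hz : 0 ≤ z) (hz1 : z ≤ 1)
    {S : Set (ℝ × ℝ)} => le_boxMeasure (k := m + 1) (K := m + 1 + ε) (by linarith)
      (by linarith) hA hAk hA1 ha hab hb hz hz1 (S := S)
  rcases Nat.even_or_odd' i with ⟨s, rfl | rfl⟩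
  · have e1 : 2 * s / 2 = s := by omega
    have ev : Even (2 * s) := by simp
    have hpos := hbox (hlnn s) le_rfl (hle1 s) le_rfl zero_le_one
      (S := {o | SelPos (m + 1) l A (2 * s) o})
      (by
        rintro ⟨t, u⟩ ⟨ht, hu⟩
        exact Or.inr (Or.inl ⟨ev, Or.inr ⟨ht.2, by rwa [e1]⟩⟩))
      (by
        rintro ⟨t, u⟩ ⟨ht, hu⟩
        exact Or.inr (Or.inl ⟨ev, Or.inl ht⟩))
      (by simp)
    have hneg := hbox le_rfl (hrnn s) (hrle s) le_rfl zero_le_one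
      (S := {o | SelNeg (m + 1) r A (2 * s) o})
      (by simp)
      (by
        rintro ⟨t, u⟩ ⟨ht, hu⟩
        refine Or.inl ⟨ev, hi0, ht, ?_⟩
        rw [e1]
        exact fun h => absurd h.2 (not_lt.2 hu.1))
      (by simp)
    refine (weighted_count hm hε ?_ ?_ ?_).trans (add_le_add (mul_le_mul_left hpos _)
      (mul_le_mul_left hneg _))
    · nlinarith [hr s]
    · nlinarith [hlnn s, hle1 s, mul_nonneg (zero_le_one.trans hm) (hlnn s)]
    · nlinarith [hrle s]
  · have e1 : (2 * s + 1) / 2 = s := by omega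
    have e2 : (2 * s + 1 + 1) / 2 = s + 1 := by omega
    have od : Odd (2 * s + 1) := by simp
    have hneg := hbox (hrnn (s + 1)) le_rfl (hrle (s + 1)) zero_le_one le_rfl
      (S := {o | SelNeg (m + 1) r A (2 * s + 1) o})
      (by
        rintro ⟨t, u⟩ ⟨ht, hu⟩
        exact Or.inr ⟨od, Or.inr (Or.inr (by rwa [e2]))⟩)
      (by
        rintro ⟨t, u⟩ ⟨ht, hu⟩
        exact Or.inr ⟨od, Or.inr (Or.inl ht)⟩)
      (by
        rintro ⟨t, u⟩ ⟨ht, hu⟩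
        exact Or.inr ⟨od, Or.inl ht.1⟩)
    have hneg0 : 0 ≤ (m + 1) * r (s + 1) + (1 - r (s + 1)) + (m + 1 + ε - (m + 1)) * 1 := by
      nlinarith [hrle (s + 1), mul_nonneg (show 0 ≤ m + 1 by linarith) (hrnn (s + 1))]
    rcases Nat.eq_zero_or_pos s with rfl | hs
    · have hpos : ENNReal.ofReal (0 / (m + 1 + ε)) ≤
          boxMeasure (m + 1 + ε) {o | SelPos (m + 1) l A (2 * 0 + 1) o} := by simp
      refine (weighted_count hm hε ?_ le_rfl hneg0).trans (add_le_add
        (mul_le_mul_left hpos _) (mul_le_mul_left hneg _))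
      nlinarith [hr 1]
    · have hpos := hbox le_rfl (hlnn s) (hle1 s) zero_le_one le_rfl
        (S := {o | SelPos (m + 1) l A (2 * s + 1) o})
        (by simp)
        (by
          rintro ⟨t, u⟩ ⟨ht, hu⟩
          refine Or.inr (Or.inr ⟨od, by omega, Or.inr ⟨ht, ?_⟩⟩)
          rw [e1]
          exact fun h => absurd h.2 (not_lt.2 hu.1))
        (by
          rintro ⟨t, u⟩ ⟨ht, hu⟩
          exact Or.inr (Or.inr ⟨od, by omega, Or.inl ht.1⟩))
      refine (weighted_count hm hε ?_ ?_ hneg0).trans (add_le_add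
        (mul_le_mul_left hpos _) (mul_le_mul_left hneg _))
      · nlinarith [hr (s + 1), hls s hs (by omega)]
      · nlinarith [hle1 s]

/-! ### Assembling the extension -/

/-- An extension of the precoloring in which vertices outside `W` may receive color sets of measure
larger than one. -/
theorem exists_enlarged_sets {V : Type*} [Finite V] {G : SimpleGraph V} {W : Set V} {m ε : ℝ}
    (hm : 1 ≤ m) (hε : 0 < ε) {n : ℕ} (hn : 0 < n) {c : V → Set ℝ}
    (hc : IsFracColoring G (m + 1) c)
    (hineq : 1 ≤ (m + ε) * ε +
      ε * (m + 1 + ε) * ∑ j ∈ Finset.range (n - 1), m ^ (2 * j + 2))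
    {ctr : V → V} {lev : V → ℕ} (hW0 : ∀ w ∈ W, ctr w = w ∧ lev w = 0)
    (hnear : ∀ v, lev v < 2 * n → ctr v ∈ W) (hlev0 : ∀ v, lev v = 0 → v ∈ W)
    (hlev : ∀ v, lev v ≤ 2 * n)
    (hadj : ∀ u v, G.Adj u v → (lev u = 2 * n ∧ lev v = 2 * n) ∨
        (lev u + 1 = lev v ∧ (lev v < 2 * n → ctr u = ctr v)) ∨
        (lev v + 1 = lev u ∧ (lev u < 2 * n → ctr u = ctr v)))
    {P : V → Set ℝ} (hP : IsFracPrecoloring (m + 1 + ε) W P) :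
    ∃ C : V → Set ℝ, (∀ v, C v ⊆ Set.Ico 0 (m + 1 + ε)) ∧ (∀ v, MeasurableSet (C v)) ∧
      (∀ v ∉ W, 1 ≤ volume (C v)) ∧ (∀ u v, G.Adj u v → Disjoint (C u) (C v)) ∧
      ∀ w ∈ W, C w = P w := by
  obtain ⟨hck, hcm, hc1, hcd⟩ := hc
  obtain ⟨l, hl, hl0, hlnn, hln, hl1, hls⟩ := exists_thresholds hm hε hn hineq
  have hmε : 0 < m + ε := by linarith
  have hK : 0 < m + 1 + ε := by linarith
  let r : ℕ → ℝ := fun s => m / (m + ε) * l s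
  have hr : ∀ s, (m + ε) * r s = m * l s := fun s => by
    simp only [r]
    field_simp
  have hranti : Antitone r := fun a b h => mul_le_mul_of_nonneg_left (hl h) (by positivity)
  have hln0 : l n = 0 := hln n le_rfl
  have hrn0 : r n = 0 := by simp [r, hln0]
  have := isProbabilityMeasure_boxMeasure hK
  -- the type of a color is the set of precolored vertices containing it
  let τ : ℝ → V → Prop := fun x w => w ∈ W ∧ x ∈ P w
  have hτ : Measurable τ := measurable_pi_lambda _ fun w => by
    refine measurableSet_setOfPred.1 ?_
    by_cases hw : w ∈ W
    · have e : {x | τ x w} = P w := by ext x; simp [τ, hw]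
      rw [e]; exact (hP w hw).2.1
    · have e : {x | τ x w} = ∅ := by ext x; simp [τ, hw]
      rw [e]; exact MeasurableSet.empty
  let I : (V → Prop) → ℝ × ℝ → V → Prop := fun T o v =>
    (T (ctr v) ∧ SelPos (m + 1) l (c v) (lev v) o) ∨
      (¬ T (ctr v) ∧ SelNeg (m + 1) r (c v) (lev v) o)
  have hIpos : ∀ {T o v}, T (ctr v) → (I T o v ↔ SelPos (m + 1) l (c v) (lev v) o) := by
    intro T o v h
    simp [I, h]
  have hIneg : ∀ {T o v}, ¬ T (ctr v) → (I T o v ↔ SelNeg (m + 1) r (c v) (lev v) o) := by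
    intro T o v h
    simp [I, h]
  have hIfar : ∀ {T o v}, lev v = 2 * n → (I T o v ↔ o.1 ∈ c v) := by
    intro T o v h
    by_cases hT : T (ctr v)
    · rw [hIpos hT, h, selPos_far hn hln0]
    · rw [hIneg hT, h, selNeg_far hn hrn0]
  have hI : ∀ T v, MeasurableSet {o | I T o v} := fun T v =>
    ((MeasurableSet.const _).inter (measurableSet_selPos _ _ (hcm v) _)).union
      ((MeasurableSet.const _).inter (measurableSet_selNeg _ _ (hcm v) _))
  -- at level `2 * n` the rule does not depend on the center, so the center may be exchanged
  have hstep : ∀ T o u v, G.Adj u v → lev u + 1 = lev v → (lev v < 2 * n → ctr u = ctr v) →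
      I T o u → I T o v → False := by
    intro T o u v huv hl' hctr hu hv
    have hv' : (T (ctr u) ∧ SelPos (m + 1) l (c v) (lev v) o) ∨
        (¬ T (ctr u) ∧ SelNeg (m + 1) r (c v) (lev v) o) := by
      rcases (hlev v).lt_or_eq with h | h
      · rw [hctr h]
        exact hv
      · have hcv := (hIfar h).1 hv
        rw [h, selPos_far hn hln0, selNeg_far hn hrn0]
        tauto
    rw [← hl'] at hv'
    rcases hv' with ⟨hT, hv'⟩ | ⟨hT, hv'⟩
    · exact selPos_disjoint hl (hck u) (hck v) (hcd _ _ huv) _ o ((hIpos hT).1 hu) hv'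
    · exact selNeg_disjoint hranti (hck u) (hck v) (hcd _ _ huv) _ o ((hIneg hT).1 hu) hv'
  have hindep : ∀ T o u v, G.Adj u v → I T o u → I T o v → False := by
    intro T o u v huv hu hv
    rcases hadj u v huv with ⟨h1, h2⟩ | ⟨h1, h2⟩ | ⟨h1, h2⟩
    · exact Set.disjoint_left.1 (hcd _ _ huv) ((hIfar h1).1 hu) ((hIfar h2).1 hv)
    · exact hstep T o u v huv h1 h2 hu hv
    · exact hstep T o v u huv.symm h1 (fun h => (h2 h).symm) hv hu
  obtain ⟨C, hCm, hCv, hCx⟩ := exists_realization (boxMeasure (m + 1 + ε))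
    (Set.Ico 0 (m + 1 + ε)) measurableSet_Ico (by simp) τ hτ I hI
  refine ⟨C, fun v x hx => ?_, hCm, fun v hv => ?_, fun u v huv => ?_, fun w hw => ?_⟩
  · obtain ⟨o, ho⟩ := hCx x
    exact ((ho v).1 hx).1
  · rw [hCv]
    rcases (hlev v).lt_or_eq with h | h
    · have hw := hnear v h
      obtain ⟨hPs, hPm, hP1⟩ := hP _ hw
      have hrest : volume (Set.Ico 0 (m + 1 + ε) \ P (ctr v)) = ENNReal.ofReal (m + ε) := by
        rw [measure_sdiff hPs hPm.nullMeasurableSet (by simp [hP1]), hP1, Real.volume_Ico,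
          ← ENNReal.ofReal_one, ← ENNReal.ofReal_sub _ zero_le_one]
        congr 1
        ring
      have hsplit := lintegral_inter_add_sdiff (μ := volume)
        (fun x => boxMeasure (m + 1 + ε) {o | I (τ x) o v}) (Set.Ico 0 (m + 1 + ε)) hPm
      rw [Set.inter_eq_self_of_subset_right hPs] at hsplit
      have e1 : ∫⁻ x in P (ctr v), boxMeasure (m + 1 + ε) {o | I (τ x) o v} =
          boxMeasure (m + 1 + ε) {o | SelPos (m + 1) l (c v) (lev v) o} * 1 := by
        rw [← hP1, ← setLIntegral_const]
        refine setLIntegral_congr_fun hPm fun x hx => ?_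
        have hT : τ x (ctr v) := ⟨hw, hx⟩
        simp only [hIpos hT]
      have e2 : ∫⁻ x in Set.Ico 0 (m + 1 + ε) \ P (ctr v),
            boxMeasure (m + 1 + ε) {o | I (τ x) o v} =
          boxMeasure (m + 1 + ε) {o | SelNeg (m + 1) r (c v) (lev v) o} *
            ENNReal.ofReal (m + ε) := by
        rw [← hrest, ← setLIntegral_const]
        refine setLIntegral_congr_fun (measurableSet_Ico.diff hPm) fun x hx => ?_
        have hT : ¬ τ x (ctr v) := fun h => hx.2 h.2
        simp only [hIneg hT]
      rw [← hsplit, e1, e2]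
      exact sel_mass hm hε hl hl0 hlnn hl1 hls hr (hcm v) (hck v) (hc1 v)
        (fun h0 => hv (hlev0 v h0)) h
    · simp only [hIfar h]
      rw [setLIntegral_const, Real.volume_Ico, sub_zero]
      have hb := le_boxMeasure (k := m + 1) (K := m + 1 + ε) (by linarith) (by linarith)
        (hcm v) (hck v) (hc1 v) le_rfl le_rfl zero_le_one le_rfl zero_le_one
        (S := {o | o.1 ∈ c v}) (by simp) (fun o ho => ho.1) (by simp)
      refine le_trans ?_ (mul_le_mul_left hb _)
      rw [← ENNReal.ofReal_mul (by simpa using hK.le), ENNReal.one_le_ofReal]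
      field_simp
      linarith
  · rw [Set.disjoint_left]
    intro x hx hx'
    obtain ⟨o, ho⟩ := hCx x
    exact hindep _ o u v huv ((ho u).1 hx).2 ((ho v).1 hx').2
  · obtain ⟨hcw, hlw⟩ := hW0 w hw
    ext x
    obtain ⟨o, ho⟩ := hCx x
    rw [ho w]
    by_cases hx : x ∈ P w
    · have hT : τ x (ctr w) := by
        rw [hcw]
        exact ⟨hw, hx⟩
      rw [hIpos hT, hlw]
      exact ⟨fun _ => hx, fun _ => ⟨(hP w hw).1 hx, Or.inl rfl⟩⟩
    · have hT : ¬ τ x (ctr w) := by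
        rw [hcw]
        exact fun h => hx h.2
      rw [hIneg hT, hlw]
      simp [SelNeg, hx]

/-- Extension theorem for distances divisible by four. -/
theorem extend_d0 (d : ℕ) (hd : 0 < d) (hd4 : d % 4 = 0) (k : ℚ) (ε : ℝ) (hε : 0 < ε)
    (hk2 : 2 ≤ (k : ℝ)) (hk3 : (k : ℝ) < 2 + 1 / (2 * ((d / 4 : ℕ) : ℝ) - 1))
    (hineq : 1 / ((k : ℝ) + ε) ≤
      ε * ∑ j ∈ Finset.range (d / 4 - 1), ((k : ℝ) - 1) ^ (2 * j + 2) +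
        ε * ((k : ℝ) - 1 + ε) / ((k : ℝ) + ε))
    (V : Type) [Fintype V] (G : SimpleGraph V) (W : Set V)
    (hG : FracColorable G (k : ℝ)) (hW : DistAtLeast G d W)
    (P : V → Set ℝ) (hP : IsFracPrecoloring ((k : ℝ) + ε) W P) :
    ∃ c, IsFracColoring G ((k : ℝ) + ε) c ∧ ∀ w ∈ W, c w = P w := by
  obtain ⟨c₀, hc₀⟩ := hG
  obtain ⟨n, rfl⟩ : ∃ n, d = 4 * n := ⟨d / 4, by omega⟩
  have hn : 0 < n := by omega
  rw [Nat.mul_div_cancel_left n (by norm_num)] at hk3 hineq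
  obtain ⟨m, hm⟩ : ∃ m : ℝ, (k : ℝ) = m + 1 := ⟨k - 1, by ring⟩
  rw [hm] at hk2 hk3 hineq hc₀ hP ⊢
  have hm1 : 1 ≤ m := by linarith
  have hK : 0 < m + 1 + ε := by linarith
  simp only [add_sub_cancel_right] at hineq
  rw [div_le_iff₀ hK, add_mul, div_mul_cancel₀ _ hK.ne'] at hineq
  obtain ⟨ctr, lev, hW0, hnear, hlev0, hlev, hadj⟩ := exists_levels hn hW
    fun u v huv p i hp => no_short_odd_cycle hc₀ hk2 hn hk3 huv p hp
  obtain ⟨C, hCs, hCm, hC1, hCd, hCW⟩ := exists_enlarged_sets hm1 hε hn hc₀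
    (by linarith) hW0 hnear hlev0 hlev hadj hP
  have hsub : ∀ v, ∃ A ⊆ C v, MeasurableSet A ∧ volume A = 1 ∧ (v ∈ W → A = C v) := by
    intro v
    by_cases hv : v ∈ W
    · exact ⟨C v, subset_rfl, hCm v, by rw [hCW v hv, (hP v hv).2.2], fun _ => rfl⟩
    · obtain ⟨A, hA, hAm, hA1⟩ := exists_measurable_subset_eq (hCm v)
        (measure_ne_top_of_subset (hCs v) (by simp)) (hC1 v hv)
      exact ⟨A, hA, hAm, hA1, fun h => absurd h hv⟩
  choose A hAC hAm hA1 hAW using hsub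
  exact ⟨A, ⟨fun v => (hAC v).trans (hCs v), hAm, hA1,
    fun u v huv => (hCd u v huv).mono (hAC u) (hAC v)⟩,
    fun w hw => (hAW w hw).trans (hCW w hw)⟩
end
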